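/- arXiv:2509.25209 — 8 statements merged into one kernel-verified Lean document; each statement's English description precedes it below -/
import Mathlib

section
/- For the quantity of interest Γ(f) = max[f] = max_{x∈X} f(x), every recovery map Δ : ℝ^M → ℝ satisfies gwce_ε(Δ) ≥ (1/2) max_{x∈X} u_{0,ε}(x) + (1/2) min_{1≤m≤M} ε_m, where u_{0,ε}(x) = min_{1≤m≤M}(ε_m + dist(x,x⁽ᵐ⁾)^α). -/
open scoped ENNReal

/-- For the quantity of interest `max[f] = max_{x ∈ X} f(x)`, every recovery map
`Δ : ℝ^M → ℝ` satisfies `gwce_ε(Δ) ≥ (1/2) max_{x} u_{0,ε}(x) + (1/2) min_m ε_m`. -/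
theorem stmt10 {X : Type*} [MetricSpace X] [CompactSpace X] [Nonempty X]
    (α : ℝ) (hα : 0 < α) (hα1 : α ≤ 1)
    (M : ℕ) (hM : 0 < M) (xs : Fin M → X) (ε : Fin M → ℝ) (hε : ∀ m, 0 ≤ ε m)
    (gwce : ((Fin M → ℝ) → ℝ) → ℝ≥0∞)
    (hgwce : ∀ Δ : (Fin M → ℝ) → ℝ, gwce Δ =
      ⨆ (f : X → ℝ) (_ : ∀ x x' : X, |f x - f x'| ≤ dist x x' ^ α)
        (y : Fin M → ℝ) (_ : ∀ m, |y m - f (xs m)| ≤ ε m),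
        ENNReal.ofReal |(⨆ x : X, f x) - Δ y|)
    (Δ : (Fin M → ℝ) → ℝ) :
    ENNReal.ofReal ((1 / 2) * (⨆ x : X, ⨅ m : Fin M, (ε m + dist x (xs m) ^ α)) +
      (1 / 2) * ⨅ m : Fin M, ε m) ≤ gwce Δ := by
  have : Nonempty (Fin M) := ⟨⟨0, hM⟩⟩
  have bdd : ∀ g : Fin M → ℝ, BddBelow (Set.range g) := fun g => (Set.finite_range g).bddBelow
  have key : ∀ f : X → ℝ, (∀ x x' : X, |f x - f x'| ≤ dist x x' ^ α) →
      (∀ m, |(0:ℝ) - f (xs m)| ≤ ε m) → ENNReal.ofReal |(⨆ x : X, f x) - Δ 0| ≤ gwce Δ := by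
    intro f hf hy
    rw [hgwce]
    exact le_iSup_of_le f (le_iSup_of_le hf (le_iSup_of_le 0 (le_iSup_of_le hy le_rfl)))
  have one : ∀ x x' : X, (⨅ m : Fin M, (ε m + dist x (xs m) ^ α)) - dist x x' ^ α ≤
      ⨅ m : Fin M, (ε m + dist x' (xs m) ^ α) := by
    intro x x'
    refine le_ciInf fun m => ?_
    have h1 := ciInf_le (bdd fun m => ε m + dist x (xs m) ^ α) m
    have h2 : dist x (xs m) ^ α ≤ (dist x x' + dist x' (xs m)) ^ α :=
      Real.rpow_le_rpow dist_nonneg (dist_triangle _ _ _) hα.le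
    have h3 := Real.rpow_add_le_add_rpow (dist_nonneg (x := x) (y := x'))
      (dist_nonneg (x := x') (y := xs m)) hα.le hα1
    linarith
  have A := key (fun x => ⨅ m : Fin M, (ε m + dist x (xs m) ^ α)) (by
    intro x x'
    have h1 := one x x'
    have h2 := one x' x
    rw [dist_comm x' x] at h2
    rw [abs_le]
    constructor <;> linarith) (by
    intro m
    have h1 := ciInf_le (bdd fun k => ε k + dist (xs m) (xs k) ^ α) m
    simp only [dist_self, Real.zero_rpow hα.ne'] at h1
    have h0 : 0 ≤ ⨅ k : Fin M, (ε k + dist (xs m) (xs k) ^ α) :=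
      le_ciInf fun k => add_nonneg (hε k) (Real.rpow_nonneg dist_nonneg _)
    rw [abs_le]
    constructor <;> linarith)
  have B := key (fun _ => -⨅ m : Fin M, ε m) (by
    intro x x'
    simpa using Real.rpow_nonneg dist_nonneg _) (by
    intro m
    have h1 := ciInf_le (bdd ε) m
    have h0 : 0 ≤ ⨅ k : Fin M, ε k := le_ciInf hε
    rw [abs_le]
    constructor <;> linarith)
  rw [ciSup_const] at B
  refine le_trans ?_ (max_le A B)
  rw [← ENNReal.ofReal_max]
  apply ENNReal.ofReal_le_ofReal
  set S := ⨆ x : X, ⨅ m : Fin M, (ε m + dist x (xs m) ^ α)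
  set e := ⨅ m : Fin M, ε m
  rw [le_max_iff]
  by_contra! h
  have h1 := le_abs_self (S - Δ 0)
  have h2 := neg_abs_le (-e - Δ 0)
  linarith [h.1, h.2]
end

section
/- For the quantity of interest Γ(f) = max[f] = max_{x∈X} f(x), the recovery map Δ̃ : ℝ^M → ℝ defined by Δ̃(y) = max_{1≤m≤M} y_m + (1/2) max_{x∈X} u_{0,ε}(x) − (1/2) max_{1≤m≤M} ε_m satisfies gwce_ε(Δ̃) ≤ (1/2) max_{x∈X} u_{0,ε}(x) + (1/2) max_{1≤m≤M} ε_m, where u_{0,ε}(x) = min_{1≤m≤M}(ε_m + dist(x,x⁽ᵐ⁾)^α). -/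
open scoped ENNReal

/-- For the quantity of interest `max[f]`, the recovery map
`Δ̃(y) = max_m y_m + (1/2) max_x u_{0,ε}(x) - (1/2) max_m ε_m` has global worst-case error at
most `(1/2) max_x u_{0,ε}(x) + (1/2) max_m ε_m`. -/
theorem stmt11 {X : Type*} [MetricSpace X] [CompactSpace X] [Nonempty X]
    (α : ℝ) (hα : 0 < α) (hα1 : α ≤ 1)
    (M : ℕ) (hM : 0 < M) (xs : Fin M → X) (ε : Fin M → ℝ) (hε : ∀ m, 0 ≤ ε m)
    (gwce : ((Fin M → ℝ) → ℝ) → ℝ≥0∞)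
    (hgwce : ∀ Δ : (Fin M → ℝ) → ℝ, gwce Δ =
      ⨆ (f : X → ℝ) (_ : ∀ x x' : X, |f x - f x'| ≤ dist x x' ^ α)
        (y : Fin M → ℝ) (_ : ∀ m, |y m - f (xs m)| ≤ ε m),
        ENNReal.ofReal |(⨆ x : X, f x) - Δ y|) :
    gwce (fun y => (⨆ m : Fin M, y m) +
        (1 / 2) * (⨆ x : X, ⨅ m : Fin M, (ε m + dist x (xs m) ^ α)) -
        (1 / 2) * ⨆ m : Fin M, ε m) ≤
      ENNReal.ofReal ((1 / 2) * (⨆ x : X, ⨅ m : Fin M, (ε m + dist x (xs m) ^ α)) +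
        (1 / 2) * ⨆ m : Fin M, ε m) := by
  have : Nonempty (Fin M) := ⟨⟨0, hM⟩⟩
  rw [hgwce]
  refine iSup_le fun f => iSup_le fun hf => iSup_le fun y => iSup_le fun hy => ?_
  apply ENNReal.ofReal_le_ofReal
  have hd : ∀ a b : X, dist a b ^ α ≤ Metric.diam (Set.univ : Set X) ^ α := fun a b =>
    Real.rpow_le_rpow dist_nonneg
      (Metric.dist_le_diam_of_mem isCompact_univ.isBounded (Set.mem_univ a) (Set.mem_univ b)) hα.le
  have hfb : BddAbove (Set.range f) := by
    let m0 : Fin M := ⟨0, hM⟩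
    refine ⟨f (xs m0) + Metric.diam (Set.univ : Set X) ^ α, ?_⟩
    rintro _ ⟨x, rfl⟩
    have h1 := (abs_le.1 (hf x (xs m0))).2
    have h2 := hd x (xs m0)
    linarith
  have hub : BddAbove (Set.range fun x : X => ⨅ m : Fin M, (ε m + dist x (xs m) ^ α)) := by
    let m0 : Fin M := ⟨0, hM⟩
    refine ⟨ε m0 + Metric.diam (Set.univ : Set X) ^ α, ?_⟩
    rintro _ ⟨x, rfl⟩
    have h1 : (⨅ m : Fin M, (ε m + dist x (xs m) ^ α)) ≤ ε m0 + dist x (xs m0) ^ α :=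
      ciInf_le (Set.finite_range _).bddBelow m0
    have h2 := hd x (xs m0)
    show (⨅ m : Fin M, (ε m + dist x (xs m) ^ α)) ≤ _
    linarith
  have hA : (⨆ x : X, f x) ≤ (⨆ m : Fin M, y m) +
      ⨆ x : X, ⨅ m : Fin M, (ε m + dist x (xs m) ^ α) := by
    refine ciSup_le fun x => ?_
    obtain ⟨m, hm⟩ := exists_eq_ciInf_of_finite (f := fun m : Fin M => ε m + dist x (xs m) ^ α)
    have h1 := (abs_le.1 (hf x (xs m))).2
    have h2 := (abs_le.1 (hy m)).1
    have h3 : y m ≤ ⨆ m : Fin M, y m := le_ciSup (Set.finite_range y).bddAbove m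
    have h4 := le_ciSup hub x
    beta_reduce at hm h4
    linarith
  have hB : (⨆ m : Fin M, y m) ≤ (⨆ x : X, f x) + ⨆ m : Fin M, ε m := by
    refine ciSup_le fun m => ?_
    have h2 := (abs_le.1 (hy m)).2
    have h3 : ε m ≤ ⨆ m : Fin M, ε m := le_ciSup (Set.finite_range ε).bddAbove m
    have h4 := le_ciSup hfb (xs m)
    linarith
  rw [abs_le]
  constructor <;> linarith
end

section
/- Suppose ε_m = ε ≥ 0 for all m ∈ {1,…,M}. For the quantity of interest Γ(f) = max[f] = max_{x∈X} f(x), the minimal global worst-case error over all recovery maps Δ : ℝ^M → ℝ equals (1/2) max_{x∈X} U(x) + ε, where U(x) = min_{1≤m≤M} dist(x,x⁽ᵐ⁾)^α; moreover this minimum is achieved by the map Δ^glo(y) = max_{1≤m≤M} y_m + (1/2) max_{x∈X} U(x), i.e., gwce_ε(Δ^glo) = (1/2) max_{x∈X} U(x) + ε ≤ gwce_ε(Δ) for every Δ : ℝ^M → ℝ. -/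
open scoped ENNReal

/-- With a common accuracy `ε`, for the quantity of interest `max[f]` the minimal
global worst-case error over all recovery maps equals `(1/2) max_x U(x) + ε`, where
`U(x) = min_m dist(x, x⁽ᵐ⁾)^α`, and it is achieved by
`Δ^glo(y) = max_m y_m + (1/2) max_x U(x)`. -/
theorem stmt13 {X : Type*} [MetricSpace X] [CompactSpace X] [Nonempty X]
    (α : ℝ) (hα : 0 < α) (hα1 : α ≤ 1)
    (M : ℕ) (hM : 0 < M) (xs : Fin M → X) (ε : ℝ) (hε : 0 ≤ ε)
    (gwce : ((Fin M → ℝ) → ℝ) → ℝ≥0∞)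
    (hgwce : ∀ Δ : (Fin M → ℝ) → ℝ, gwce Δ =
      ⨆ (f : X → ℝ) (_ : ∀ x x' : X, |f x - f x'| ≤ dist x x' ^ α)
        (y : Fin M → ℝ) (_ : ∀ m, |y m - f (xs m)| ≤ ε),
        ENNReal.ofReal |(⨆ x : X, f x) - Δ y|) :
    gwce (fun y => (⨆ m : Fin M, y m) +
        (1 / 2) * ⨆ x : X, ⨅ m : Fin M, dist x (xs m) ^ α) =
      ENNReal.ofReal ((1 / 2) * (⨆ x : X, ⨅ m : Fin M, dist x (xs m) ^ α) + ε) ∧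
    ∀ Δ : (Fin M → ℝ) → ℝ,
      ENNReal.ofReal ((1 / 2) * (⨆ x : X, ⨅ m : Fin M, dist x (xs m) ^ α) + ε) ≤ gwce Δ := by
  have : Nonempty (Fin M) := ⟨⟨0, hM⟩⟩
  have hbd : ∀ x x' : X, dist x x' ^ α ≤ (Metric.diam (Set.univ : Set X)) ^ α := fun x x' =>
    Real.rpow_le_rpow dist_nonneg
      (Metric.dist_le_diam_of_mem isCompact_univ.isBounded (Set.mem_univ _) (Set.mem_univ _)) hα.le
  have hH : ∀ f : X → ℝ, (∀ x x' : X, |f x - f x'| ≤ dist x x' ^ α) →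
      BddAbove (Set.range f) := by
    intro f hf
    obtain ⟨x0⟩ := (inferInstance : Nonempty X)
    refine ⟨f x0 + (Metric.diam (Set.univ : Set X)) ^ α, ?_⟩
    rintro _ ⟨x, rfl⟩
    have h1 := (abs_le.1 (hf x x0)).2
    have h2 := hbd x x0
    linarith
  have hfin : ∀ g : Fin M → ℝ, BddBelow (Set.range g) := fun g => (Set.finite_range g).bddBelow
  have hfin' : ∀ g : Fin M → ℝ, BddAbove (Set.range g) := fun g => (Set.finite_range g).bddAbove
  set U : X → ℝ := fun x => ⨅ m : Fin M, dist x (xs m) ^ α with hU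
  have hU1 : ∀ x x', U x ≤ U x' + dist x x' ^ α := by
    intro x x'
    suffices h : U x - dist x x' ^ α ≤ U x' by linarith
    refine le_ciInf fun m => ?_
    have h1 : U x ≤ dist x (xs m) ^ α := ciInf_le (hfin _) m
    have h2 : dist x (xs m) ^ α ≤ (dist x x' + dist x' (xs m)) ^ α :=
      Real.rpow_le_rpow dist_nonneg (dist_triangle _ _ _) hα.le
    have h3 := Real.rpow_add_le_add_rpow (p := α) (dist_nonneg (x := x) (y := x'))
      (dist_nonneg (x := x') (y := xs m)) hα.le hα1
    linarith
  have hUH : ∀ x x', |U x - U x'| ≤ dist x x' ^ α := by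
    intro x x'
    have h1 := hU1 x x'
    have h2 := hU1 x' x
    rw [dist_comm] at h2
    rw [abs_le]; constructor <;> linarith
  have hU0 : ∀ x, 0 ≤ U x := fun x => le_ciInf fun m => by positivity
  have hUxs : ∀ m, U (xs m) = 0 := by
    intro m
    refine le_antisymm ?_ (hU0 _)
    have h : U (xs m) ≤ dist (xs m) (xs m) ^ α := ciInf_le (hfin _) m
    rwa [dist_self, Real.zero_rpow hα.ne'] at h
  change gwce (fun y => (⨆ m : Fin M, y m) + (1 / 2) * ⨆ x : X, U x) =
      ENNReal.ofReal ((1 / 2) * (⨆ x : X, U x) + ε) ∧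
    ∀ Δ : (Fin M → ℝ) → ℝ, ENNReal.ofReal ((1 / 2) * (⨆ x : X, U x) + ε) ≤ gwce Δ
  have hlow : ∀ Δ : (Fin M → ℝ) → ℝ,
      ENNReal.ofReal ((1 / 2) * (⨆ x : X, U x) + ε) ≤ gwce Δ := by
    intro Δ
    have key : ∀ (f : X → ℝ) (_ : ∀ x x' : X, |f x - f x'| ≤ dist x x' ^ α)
        (y : Fin M → ℝ) (_ : ∀ m, |y m - f (xs m)| ≤ ε),
        ENNReal.ofReal |(⨆ x : X, f x) - Δ y| ≤ gwce Δ := by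
      intro f hf y hy
      rw [hgwce]
      exact le_iSup_of_le f (le_iSup_of_le hf (le_iSup_of_le y (le_iSup_of_le hy le_rfl)))
    have hpH : ∀ x x' : X, |(U x + ε) - (U x' + ε)| ≤ dist x x' ^ α := by
      intro x x'
      rw [add_sub_add_right_eq_sub]; exact hUH x x'
    have k1 := key (fun x => U x + ε) hpH 0 (by intro m; simp [hUxs, abs_of_nonneg hε])
    have k2 := key (fun _ => -ε) (by intro x x'; simp; positivity) 0
      (by intro m; simp [abs_of_nonneg hε])
    rw [ciSup_const] at k2
    have hS : (⨆ x : X, U x) ≤ (⨆ x : X, (U x + ε)) - ε := by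
      refine ciSup_le fun x => ?_
      have := le_ciSup (hH _ hpH) x
      linarith
    rcases le_total ((1 / 2) * (⨆ x : X, U x)) (Δ 0) with h | h
    · refine le_trans (ENNReal.ofReal_le_ofReal ?_) k2
      have := neg_abs_le (-ε - Δ 0)
      linarith
    · refine le_trans (ENNReal.ofReal_le_ofReal ?_) k1
      have := le_abs_self ((⨆ x : X, (U x + ε)) - Δ 0)
      linarith
  refine ⟨le_antisymm ?_ (hlow _), hlow⟩
  rw [hgwce]
  refine iSup_le fun f => iSup_le fun hf => iSup_le fun y => iSup_le fun hy =>
    ENNReal.ofReal_le_ofReal ?_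
  have h1 : (⨆ m, y m) ≤ (⨆ x, f x) + ε := by
    refine ciSup_le fun m => ?_
    have a := le_ciSup (hH f hf) (xs m)
    have b := (abs_le.1 (hy m)).2
    linarith
  have h2 : (⨆ x, f x) ≤ (⨆ m, y m) + ε + ⨆ x, U x := by
    refine ciSup_le fun x => ?_
    have a := le_ciSup (hH U hUH) x
    have b : f x - (⨆ m, y m) - ε ≤ U x := by
      refine le_ciInf fun m => ?_
      have c := le_ciSup (hfin' y) m
      have d := (abs_le.1 (hy m)).1
      have e := (abs_le.1 (hf x (xs m))).2
      linarith
    linarith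
  rw [abs_le]; constructor <;> linarith
end

section
/- Let ‖·‖ be a norm on ℝ^d, let X = B(0,1) be its closed unit ball, and let μ be Lebesgue measure on X normalized so that μ(X) = 1. Then for any α ∈ (0,1], any M ≥ 1, and any points x⁽¹⁾,…,x⁽ᴹ⁾ ∈ X, one has ∫_X min_{1≤m≤M} ‖x − x⁽ᵐ⁾‖^α dμ(x) ≥ (d/(d+α)) · M^{−α/d}. -/
open MeasureTheory

theorem aux_norm (d : ℕ) (hd : 0 < d)
    (N : (Fin d → ℝ) → ℝ)
    (hN0 : ∀ x, N x = 0 ↔ x = 0)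
    (hNsmul : ∀ (c : ℝ) (x), N (c • x) = |c| * N x)
    (hNadd : ∀ x y, N (x + y) ≤ N x + N y) :
    Continuous N ∧ (∀ x, 0 ≤ N x) ∧ IsCompact {x | N x ≤ 1} := by
  let p : Seminorm ℝ (Fin d → ℝ) := Seminorm.of N hNadd (fun c x => by
    rw [hNsmul, Real.norm_eq_abs])
  have hp : ∀ x, p x = N x := fun x => rfl
  have hnn : ∀ x, 0 ≤ N x := fun x => apply_nonneg p x
  have hc : Continuous N := by
    have h := p.convexOn.continuousOn isOpen_univ
    exact continuousOn_univ.1 h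
  refine ⟨hc, hnn, ?_⟩
  haveI : Nonempty (Fin d) := ⟨⟨0, hd⟩⟩
  have hne : (Metric.sphere (0 : Fin d → ℝ) 1).Nonempty := NormedSpace.sphere_nonempty.2 zero_le_one
  obtain ⟨z, hz, hmin⟩ := (isCompact_sphere (0 : Fin d → ℝ) 1).exists_isMinOn hne hc.continuousOn
  have hz1 : ‖z‖ = 1 := by simpa using hz
  have hzpos : 0 < N z := by
    refine lt_of_le_of_ne (hnn z) (fun h => ?_)
    have := (hN0 z).1 h.symm
    rw [this] at hz1
    simp at hz1
  refine (isCompact_closedBall (0 : Fin d → ℝ) (1 / N z)).of_isClosed_subset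
    (isClosed_le hc continuous_const) ?_
  intro x hx
  have hx : N x ≤ 1 := hx
  rw [mem_closedBall_zero_iff, le_div_iff₀ hzpos]
  by_cases h0 : x = 0
  · simp [h0]
  have hxp : 0 < ‖x‖ := norm_pos_iff.2 h0
  have hm : (‖x‖⁻¹ • x) ∈ Metric.sphere (0 : Fin d → ℝ) 1 := by
    simp [norm_smul, hxp.ne']
  have h1 : N z ≤ N (‖x‖⁻¹ • x) := hmin hm
  rw [hNsmul, abs_of_pos (inv_pos.2 hxp)] at h1
  calc ‖x‖ * N z ≤ ‖x‖ * (‖x‖⁻¹ * N x) := by gcongr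
    _ = N x := by field_simp
    _ ≤ 1 := hx

open scoped Pointwise in
theorem aux_vol (d : ℕ) (N : (Fin d → ℝ) → ℝ)
    (hNsmul : ∀ (c : ℝ) (x), N (c • x) = |c| * N x) (r : ℝ) (hr : 0 < r) (y : Fin d → ℝ) :
    volume {x | N (x - y) ≤ r} = ENNReal.ofReal (r ^ d) * volume {x | N x ≤ 1} := by
  have h1 : {x | N (x - y) ≤ r} = (fun x => x + (-y)) ⁻¹' (r • {x | N x ≤ 1}) := by
    ext x
    rw [Set.mem_preimage, Set.mem_smul_set_iff_inv_smul_mem₀ hr.ne']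
    simp only [Set.mem_setOf_eq, hNsmul, abs_of_pos (inv_pos.2 hr), ← sub_eq_add_neg]
    rw [inv_mul_le_iff₀ hr, mul_one]
  rw [h1, measure_preimage_add_right, Measure.addHaar_smul]
  simp [abs_of_pos hr]

theorem aux_int (d : ℕ) (hd : 0 < d) (α : ℝ) (hα : 0 < α) (M : ℕ) (hM : 0 < M) :
    ∫ t in (0:ℝ)..((M : ℝ) ^ (-(α / (d : ℝ)))), (1 - (M:ℝ) * t ^ ((d:ℝ) / α))
      = ((d : ℝ) / ((d : ℝ) + α)) * (M : ℝ) ^ (-(α / (d : ℝ))) := by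
  have hd' : (0:ℝ) < d := by exact_mod_cast hd
  have hM' : (0:ℝ) < M := by exact_mod_cast hM
  have hp : 0 < (d:ℝ) / α := by positivity
  set T := (M : ℝ) ^ (-(α / (d : ℝ))) with hT
  have hTp : 0 < T := by positivity
  have hTp' : T ^ ((d:ℝ)/α) = (M:ℝ)⁻¹ := by
    rw [hT, ← Real.rpow_mul hM'.le]
    have : -(α / (d:ℝ)) * (d / α) = -1 := by field_simp
    rw [this, Real.rpow_neg_one]
  rw [intervalIntegral.integral_sub (by simp)
    ((intervalIntegral.intervalIntegrable_rpow' (by linarith)).const_mul _),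
    intervalIntegral.integral_const_mul, integral_rpow (Or.inl (by linarith)),
    Real.rpow_add_one hTp.ne', hTp', Real.zero_rpow (by positivity)]
  simp
  field_simp
  ring

theorem stmt15 (d : ℕ) (hd : 0 < d)
    (N : (Fin d → ℝ) → ℝ)
    (hN0 : ∀ x, N x = 0 ↔ x = 0)
    (hNsmul : ∀ (c : ℝ) (x), N (c • x) = |c| * N x)
    (hNadd : ∀ x y, N (x + y) ≤ N x + N y)
    (α : ℝ) (hα : 0 < α) (hα1 : α ≤ 1)
    (M : ℕ) (hM : 0 < M)
    (xs : Fin M → (Fin d → ℝ)) (hxs : ∀ m, N (xs m) ≤ 1) :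
    ((d : ℝ) / ((d : ℝ) + α)) * (M : ℝ) ^ (-(α / (d : ℝ))) ≤
      ∫ x, (⨅ m : Fin M, N (x - xs m) ^ α)
        ∂((volume {x : Fin d → ℝ | N x ≤ 1})⁻¹ •
          volume.restrict {x : Fin d → ℝ | N x ≤ 1}) := by
  obtain ⟨hc, hnn, hK⟩ := aux_norm d hd N hN0 hNsmul hNadd
  have hd' : (0:ℝ) < d := by exact_mod_cast hd
  have hM' : (0:ℝ) < M := by exact_mod_cast hM
  haveI : Nonempty (Fin M) := ⟨⟨0, hM⟩⟩
  set X : Set (Fin d → ℝ) := {x | N x ≤ 1} with hX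
  set V := volume X with hV
  have hVtop : V ≠ ⊤ := hK.measure_lt_top.ne
  have hV0 : V ≠ 0 := by
    have hopen : IsOpen {x | N x < 1} := isOpen_lt hc continuous_const
    have : 0 < volume {x | N x < 1} := hopen.measure_pos volume ⟨0, by
      simp [(hN0 0).2 rfl]⟩
    exact (this.trans_le (measure_mono (fun x (hx : N x < 1) => hx.le))).ne'
  set μ := V⁻¹ • volume.restrict X with hμ
  haveI : IsProbabilityMeasure μ := ⟨by
    simp [hμ, ← hV, ENNReal.inv_mul_cancel hV0 hVtop]⟩
  set F : (Fin d → ℝ) → ℝ := fun x => ⨅ m : Fin M, N (x - xs m) ^ α with hF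
  have hFnn : ∀ x, 0 ≤ F x := fun x => Real.iInf_nonneg (fun m => Real.rpow_nonneg (hnn _) _)
  have hFm : Measurable F := by
    refine Measurable.iInf (fun m => ?_)
    exact ((hc.measurable.comp (measurable_id.sub_const _)).pow_const α)
  have hμX : ∀ᵐ x ∂μ, x ∈ X := by
    refine Measure.ae_smul_measure ?_ _
    exact ae_restrict_mem hK.measurableSet
  have hNneg : ∀ x, N (-x) = N x := fun x => by simpa using hNsmul (-1) x
  have hFint : Integrable F μ := by
    refine Integrable.of_bound hFm.aestronglyMeasurable (2 ^ α) ?_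
    filter_upwards [hμX] with x hx
    have hx : N x ≤ 1 := hx
    rw [Real.norm_eq_abs, abs_of_nonneg (hFnn x)]
    refine (ciInf_le (Set.finite_range _).bddBelow ⟨0, hM⟩).trans ?_
    refine Real.rpow_le_rpow (hnn _) ?_ hα.le
    rw [sub_eq_add_neg]
    refine (hNadd _ _).trans ?_
    rw [hNneg]
    linarith [hxs ⟨0, hM⟩]
  have key : ∀ t : ℝ, 0 < t → ENNReal.ofReal (1 - M * t ^ ((d:ℝ)/α)) ≤ μ {x | t < F x} := by
    intro t ht
    have hr : 0 < t ^ (1/α) := by positivity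
    have hsub : {x | t < F x}ᶜ ⊆ ⋃ m : Fin M, {x | N (x - xs m) ≤ t ^ (1/α)} := by
      intro x hx
      have hx : F x ≤ t := not_lt.1 hx
      obtain ⟨m, hm⟩ := exists_eq_ciInf_of_finite (f := fun m : Fin M => N (x - xs m) ^ α)
      rw [Set.mem_iUnion]
      refine ⟨m, ?_⟩
      have h2 : N (x - xs m) ^ α ≤ t := by
        have : N (x - xs m) ^ α = F x := hm
        rw [this]; exact hx
      show N (x - xs m) ≤ t ^ (1/α)
      have h3 := Real.rpow_le_rpow (Real.rpow_nonneg (hnn _) _) h2 (by positivity : 0 ≤ 1/α)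
      rwa [← Real.rpow_mul (hnn _), mul_one_div_cancel hα.ne', Real.rpow_one] at h3
    have hpow : (t ^ (1/α)) ^ d = t ^ ((d:ℝ)/α) := by
      rw [← Real.rpow_natCast, ← Real.rpow_mul ht.le]
      congr 1; ring
    have hball : ∀ m, μ {x | N (x - xs m) ≤ t ^ (1/α)} ≤ ENNReal.ofReal (t ^ ((d:ℝ)/α)) := by
      intro m
      rw [hμ, Measure.smul_apply, smul_eq_mul]
      calc _ ≤ V⁻¹ * volume {x | N (x - xs m) ≤ t ^ (1/α)} := by
            gcongr; exact Measure.restrict_le_self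
        _ = V⁻¹ * (ENNReal.ofReal (t ^ ((d:ℝ)/α)) * V) := by
            rw [aux_vol d N hNsmul _ hr, hpow]
        _ = ENNReal.ofReal (t ^ ((d:ℝ)/α)) := by
            rw [mul_comm, mul_assoc, ENNReal.mul_inv_cancel hV0 hVtop, mul_one]
    have hcompl : μ {x | t < F x}ᶜ ≤ ENNReal.ofReal (M * t ^ ((d:ℝ)/α)) := by
      calc _ ≤ ∑ m : Fin M, μ {x | N (x - xs m) ≤ t ^ (1/α)} :=
            (measure_mono hsub).trans (measure_iUnion_fintype_le _ _)
        _ ≤ ∑ m : Fin M, ENNReal.ofReal (t ^ ((d:ℝ)/α)) := Finset.sum_le_sum (fun m _ => hball m)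
        _ = _ := by
            rw [ENNReal.ofReal_mul hM'.le]; simp
    have hmeas : MeasurableSet {x | t < F x} := measurableSet_lt measurable_const hFm
    have hadd := prob_add_prob_compl (μ := μ) hmeas
    rw [ENNReal.ofReal_sub _ (by positivity), ENNReal.ofReal_one, ← hadd]
    exact tsub_le_iff_right.2 (by gcongr)
  have hTp : 0 < (M : ℝ) ^ (-(α / (d : ℝ))) := by positivity
  have hlc := lintegral_eq_lintegral_meas_lt μ (Filter.Eventually.of_forall hFnn) hFm.aemeasurable
  rw [← ENNReal.ofReal_le_ofReal_iff (integral_nonneg hFnn),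
    ofReal_integral_eq_lintegral_ofReal hFint (Filter.Eventually.of_forall hFnn), hlc,
    ← aux_int d hd α hα M hM, intervalIntegral.integral_of_le hTp.le]
  have hp : 0 < (d:ℝ) / α := by positivity
  have hII : IntegrableOn (fun t : ℝ => 1 - (M:ℝ) * t ^ ((d:ℝ) / α))
      (Set.Ioc 0 ((M : ℝ) ^ (-(α / (d : ℝ))))) := by
    rw [← intervalIntegrable_iff_integrableOn_Ioc_of_le hTp.le]
    exact IntervalIntegrable.sub (by simp)
      ((intervalIntegral.intervalIntegrable_rpow' (by linarith)).const_mul _)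
  rw [ofReal_integral_eq_lintegral_ofReal hII]
  · refine (setLIntegral_mono' measurableSet_Ioc (fun t ht => key t ht.1)).trans ?_
    exact lintegral_mono_set (fun t ht => ht.1)
  · filter_upwards [ae_restrict_mem measurableSet_Ioc] with t ht
    have h := Real.rpow_le_rpow ht.1.le ht.2 hp.le
    rw [← Real.rpow_mul hM'.le, show -(α / (d:ℝ)) * (d / α) = -1 by field_simp,
      Real.rpow_neg_one] at h
    have h2 := mul_le_mul_of_nonneg_left h hM'.le
    rw [mul_inv_cancel₀ hM'.ne'] at h2
    show (0:ℝ) ≤ _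
    linarith
end

section
/- Let ‖·‖ be a norm on ℝ^d, let X = B(0,1) be its closed unit ball with normalized Lebesgue measure μ (μ(X) = 1), let α ∈ (0,1], let ε₁,…,ε_M ≥ 0, and let p ∈ [1,∞]. Then min_{1≤m≤M} ε_m + (1/2) M^{−α/d} ≤ inf over all datasites x⁽¹⁾,…,x⁽ᴹ⁾ ∈ X of ‖u_{0,ε}‖_{L_p(X,μ)} ≤ max_{1≤m≤M} ε_m + 3 M^{−α/d}, where u_{0,ε}(x) = min_{1≤m≤M}(ε_m + ‖x − x⁽ᵐ⁾‖^α). -/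
open MeasureTheory
open scoped ENNReal

section helpers
open scoped Pointwise
variable {d : ℕ} {N : (Fin d → ℝ) → ℝ}

lemma N_nonneg (hNsmul : ∀ (c : ℝ) (x), N (c • x) = |c| * N x)
    (hNadd : ∀ x y, N (x + y) ≤ N x + N y) (x) : 0 ≤ N x := by
  have h0 : N 0 = 0 := by simpa using hNsmul 0 0
  have h1 : N (-x) = N x := by simpa using hNsmul (-1) x
  have := hNadd x (-x)
  rw [add_neg_cancel, h0, h1] at this
  linarith

lemma N_sub_comm (hNsmul : ∀ (c : ℝ) (x), N (c • x) = |c| * N x) (x y) :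
    N (x - y) = N (y - x) := by
  have h1 := hNsmul (-1) (x - y)
  simp at h1
  exact h1.symm

lemma N_cont (hNsmul : ∀ (c : ℝ) (x), N (c • x) = |c| * N x)
    (hNadd : ∀ x y, N (x + y) ≤ N x + N y) : Continuous N := by
  have : ConvexOn ℝ Set.univ N := by
    refine ⟨convex_univ, fun x _ y _ a b ha hb _ => ?_⟩
    refine (hNadd _ _).trans ?_
    rw [hNsmul, hNsmul, abs_of_nonneg ha, abs_of_nonneg hb]; rfl
  exact this.locallyLipschitz.continuous

lemma N_vol_pos (hN0 : ∀ x, N x = 0 ↔ x = 0) (hc : Continuous N) :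
    volume {x : Fin d → ℝ | N x ≤ 1} ≠ 0 := by
  have h1 : IsOpen {x : Fin d → ℝ | N x < 1} := isOpen_lt hc continuous_const
  have h2 := h1.measure_pos volume ⟨0, by simp [(hN0 0).2 rfl]⟩
  exact (h2.trans_le (measure_mono fun x (hx : N x < 1) => hx.le)).ne'

lemma N_vol_fin (hd : 0 < d) (hN0 : ∀ x, N x = 0 ↔ x = 0)
    (hNsmul : ∀ (c : ℝ) (x), N (c • x) = |c| * N x) (hnn : ∀ x, 0 ≤ N x) (hc : Continuous N) :
    volume {x : Fin d → ℝ | N x ≤ 1} ≠ ∞ := by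
  haveI : Nonempty (Fin d) := ⟨⟨0, hd⟩⟩
  obtain ⟨x0, hx0, hmin⟩ := (isCompact_sphere (0 : Fin d → ℝ) 1).exists_isMinOn
    (NormedSpace.sphere_nonempty.2 zero_le_one) hc.continuousOn
  have hx0' : x0 ≠ 0 := by
    rintro rfl; simp at hx0
  have hpos : 0 < N x0 := lt_of_le_of_ne (hnn _) (fun h => hx0' ((hN0 _).1 h.symm))
  have hsub : {x : Fin d → ℝ | N x ≤ 1} ⊆ Metric.closedBall 0 (1 / N x0) := by
    intro x hx
    have hx : N x ≤ 1 := hx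
    rw [mem_closedBall_zero_iff, le_div_iff₀ hpos]
    by_cases hz : x = 0
    · subst hz; simp
    have hxn : 0 < ‖x‖ := norm_pos_iff.2 hz
    have h3 : N x0 ≤ N (‖x‖⁻¹ • x) := by
      apply hmin
      simp [norm_smul, hxn.ne']
    rw [hNsmul, abs_of_pos (inv_pos.2 hxn), inv_mul_eq_div, le_div_iff₀ hxn] at h3
    linarith
  exact ((measure_mono hsub).trans_lt measure_closedBall_lt_top).ne

lemma N_vol_ball (hNsmul : ∀ (c : ℝ) (x), N (c • x) = |c| * N x) (c : Fin d → ℝ) (r : ℝ)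
    (hr : 0 < r) :
    volume {x : Fin d → ℝ | N (x - c) ≤ r} =
      ENNReal.ofReal (r ^ d) * volume {x : Fin d → ℝ | N x ≤ 1} := by
  have h1 : {x : Fin d → ℝ | N (x - c) ≤ r} =
      (fun x => x + (-c)) ⁻¹' (r • {x : Fin d → ℝ | N x ≤ 1}) := by
    ext x
    simp only [Set.mem_preimage, Set.mem_smul_set_iff_inv_smul_mem₀ hr.ne', Set.mem_ofPred_eq,
      hNsmul, abs_of_pos (inv_pos.2 hr), ← sub_eq_add_neg]
    rw [inv_mul_le_iff₀ hr, mul_one]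
  rw [h1, measure_preimage_add_right, Measure.addHaar_smul]
  simp [abs_of_pos hr]

lemma packing (hd : 0 < d) (hN0 : ∀ x, N x = 0 ↔ x = 0)
    (hNsmul : ∀ (c : ℝ) (x), N (c • x) = |c| * N x)
    (hNadd : ∀ x y, N (x + y) ≤ N x + N y) (M : ℕ) (hM : 0 < M) (r : ℝ) (hr : 0 < r)
    (hr1 : r ≤ 1) (hrM : r ^ d * M = 3 ^ d) (S : Finset (Fin d → ℝ)) (hS : ∀ x ∈ S, N x ≤ 1)
    (hsep : ∀ x ∈ S, ∀ y ∈ S, x ≠ y → r < N (x - y)) : S.card ≤ M := by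
  have hc := N_cont hNsmul hNadd
  have hnn := N_nonneg hNsmul hNadd
  have hV0 := N_vol_pos hN0 hc
  have hV1 := N_vol_fin hd hN0 hNsmul hnn hc
  have hU := measure_biUnion_finset (μ := volume) (s := S)
    (f := fun c => {x : Fin d → ℝ | N (x - c) ≤ r / 2}) (by
      intro x hx y hy hxy
      rw [Function.onFun, Set.disjoint_left]
      intro z hz1 hz2
      have hz1 : N (z - x) ≤ r / 2 := hz1
      have hz2 : N (z - y) ≤ r / 2 := hz2
      have h1 := hsep x hx y hy hxy
      have h2 := hNadd (x - z) (z - y)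
      rw [N_sub_comm hNsmul x z, sub_add_sub_cancel] at h2
      linarith) (by
      intro c _
      exact (isClosed_le (hc.comp (continuous_id.sub continuous_const))
        continuous_const).measurableSet)
  have hsub : (⋃ c ∈ S, {x : Fin d → ℝ | N (x - c) ≤ r / 2}) ⊆
      {x : Fin d → ℝ | N (x - 0) ≤ 3 / 2} := by
    intro x hx
    simp only [Set.mem_iUnion, Set.mem_ofPred_eq, exists_prop] at hx ⊢
    obtain ⟨c, hcS, hx⟩ := hx
    have := hNadd (x - c) c
    have := hS c hcS
    simp at *
    linarith
  have h3 := measure_mono (μ := volume) hsub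
  rw [hU] at h3
  simp only [N_vol_ball hNsmul _ _ (half_pos hr),
    N_vol_ball hNsmul _ (3/2 : ℝ) (by norm_num), Finset.sum_const, nsmul_eq_mul] at h3
  rw [← mul_assoc, ENNReal.mul_le_mul_iff_left hV0 hV1, ← ENNReal.ofReal_natCast,
    ← ENNReal.ofReal_mul (by positivity), ENNReal.ofReal_le_ofReal_iff (by positivity),
    div_pow, div_pow, ← hrM, mul_div_assoc', div_le_div_iff_of_pos_right (by positivity),
    mul_comm] at h3
  exact_mod_cast le_of_mul_le_mul_left h3 (by positivity)

lemma covering (hd : 0 < d) (hN0 : ∀ x, N x = 0 ↔ x = 0)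
    (hNsmul : ∀ (c : ℝ) (x), N (c • x) = |c| * N x)
    (hNadd : ∀ x y, N (x + y) ≤ N x + N y) (M : ℕ) (hM : 0 < M) (r : ℝ) (hr : 0 < r)
    (hrM : r ^ d * M = 3 ^ d) :
    ∃ xs : Fin M → (Fin d → ℝ), (∀ m, N (xs m) ≤ 1) ∧
      ∀ x, N x ≤ 1 → ∃ m, N (x - xs m) ≤ r := by
  have h00 : N 0 = 0 := (hN0 0).2 rfl
  rcases le_total r 1 with hr1 | hr1
  swap
  · exact ⟨fun _ => 0, fun _ => by simp [h00], fun x hx => ⟨⟨0, hM⟩, by simpa using hx.trans hr1⟩⟩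
  classical
  let P : ℕ → Prop := fun k => ∃ S : Finset (Fin d → ℝ), S.card = k ∧ (∀ x ∈ S, N x ≤ 1) ∧
    ∀ x ∈ S, ∀ y ∈ S, x ≠ y → r < N (x - y)
  have hP0 : P 0 := ⟨∅, by simp⟩
  have hPM : ∀ k, P k → k ≤ M := by
    rintro k ⟨S, rfl, h1, h2⟩
    exact packing hd hN0 hNsmul hNadd M hM r hr hr1 hrM S h1 h2
  obtain ⟨S, hcard, h1, h2⟩ := Nat.findGreatest_spec (P := P) (Nat.zero_le M) hP0
  have hcov : ∀ x, N x ≤ 1 → ∃ y ∈ S, N (x - y) ≤ r := by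
    intro x hx
    by_contra! hcon
    have hxS : x ∉ S := fun h => by
      have := hcon x h
      rw [sub_self, h00] at this
      linarith
    have hP : P (S.card + 1) := by
      refine ⟨insert x S, Finset.card_insert_of_notMem hxS, ?_, ?_⟩
      · intro y hy
        rcases Finset.mem_insert.1 hy with rfl | hy
        · exact hx
        · exact h1 y hy
      · intro y hy z hz hyz
        rcases Finset.mem_insert.1 hy with rfl | hy' <;> rcases Finset.mem_insert.1 hz with rfl | hz'
        · exact absurd rfl hyz
        · exact hcon z hz'
        · rw [N_sub_comm hNsmul]; exact hcon y hy'
        · exact h2 y hy' z hz' hyz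
    have := Nat.le_findGreatest (hPM _ hP) hP
    omega
  obtain ⟨y0, hy0, -⟩ := hcov 0 (by simp [h00])
  haveI : Nonempty S := ⟨⟨y0, hy0⟩⟩
  have hSM : S.card ≤ M := hPM _ ⟨S, rfl, h1, h2⟩
  obtain ⟨e⟩ := Function.Embedding.nonempty_of_card_le (α := S) (β := Fin M) (by simpa using hSM)
  refine ⟨fun m => (Function.invFun e m : S), fun m => h1 _ (Subtype.prop _), fun x hx => ?_⟩
  obtain ⟨y, hy, hxy⟩ := hcov x hx
  refine ⟨e ⟨y, hy⟩, ?_⟩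
  have he := Function.leftInverse_invFun e.injective ⟨y, hy⟩
  simp only [he]
  exact hxy

lemma lower_aux {Ω : Type*} [MeasurableSpace Ω] (μ : Measure Ω) [IsProbabilityMeasure μ]
    (f : Ω → ℝ) (hf : Measurable f) (hf0 : ∀ x, 0 ≤ f x) (s : ℝ) (hs : 0 < s)
    (h : ∀ t, 0 < t → t ≤ s → μ {x | f x ≤ t} ≤ ENNReal.ofReal (t / s)) :
    ENNReal.ofReal (s / 2) ≤ ∫⁻ x, ENNReal.ofReal (f x) ∂μ := by
  rw [lintegral_eq_lintegral_meas_lt μ (Filter.Eventually.of_forall hf0) hf.aemeasurable]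
  have hint : ∫ t in Set.Ioc 0 s, (1 - t / s) = s / 2 := by
    rw [← intervalIntegral.integral_of_le hs.le, intervalIntegral.integral_sub
      (continuous_const.intervalIntegrable _ _)
      ((show Continuous fun t : ℝ => t / s by fun_prop).intervalIntegrable _ _)]
    simp
    field_simp
    norm_num
  have hii : IntegrableOn (fun t : ℝ => 1 - t / s) (Set.Ioc 0 s) :=
    (Continuous.integrableOn_Icc (by fun_prop)).mono_set Set.Ioc_subset_Icc_self
  rw [← hint, ofReal_integral_eq_lintegral_ofReal hii]
  · refine le_trans ?_ (lintegral_mono_set (Set.Ioc_subset_Ioi_self : Set.Ioc 0 s ⊆ _))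
    refine setLIntegral_mono' measurableSet_Ioc fun t ht => ?_
    have h1 : {x | t < f x} = {x | f x ≤ t}ᶜ := by ext; simp
    rw [h1, prob_compl_eq_one_sub (measurableSet_le hf measurable_const),
      ENNReal.ofReal_sub _ (div_nonneg ht.1.le hs.le), ENNReal.ofReal_one]
    exact tsub_le_tsub_left (h t ht.1 ht.2) _
  · filter_upwards [ae_restrict_mem measurableSet_Ioc] with t ht
    have : t / s ≤ 1 := (div_le_one hs).2 ht.2
    simpa using this

end helpers

theorem stmt16 (d : ℕ) (hd : 0 < d)
    (N : (Fin d → ℝ) → ℝ)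
    (hN0 : ∀ x, N x = 0 ↔ x = 0)
    (hNsmul : ∀ (c : ℝ) (x), N (c • x) = |c| * N x)
    (hNadd : ∀ x y, N (x + y) ≤ N x + N y)
    (α : ℝ) (hα : 0 < α) (hα1 : α ≤ 1)
    (M : ℕ) (hM : 0 < M)
    (ε : Fin M → ℝ) (hε : ∀ m, 0 ≤ ε m)
    (p : ℝ≥0∞) (hp : 1 ≤ p) :
    ENNReal.ofReal ((⨅ m : Fin M, ε m) + (1 / 2) * (M : ℝ) ^ (-(α / (d : ℝ)))) ≤
      (⨅ (xs : Fin M → (Fin d → ℝ)) (_ : ∀ m, N (xs m) ≤ 1),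
        eLpNorm (fun x => ⨅ m : Fin M, (ε m + N (x - xs m) ^ α)) p
          ((volume {x : Fin d → ℝ | N x ≤ 1})⁻¹ •
            volume.restrict {x : Fin d → ℝ | N x ≤ 1})) ∧
    (⨅ (xs : Fin M → (Fin d → ℝ)) (_ : ∀ m, N (xs m) ≤ 1),
        eLpNorm (fun x => ⨅ m : Fin M, (ε m + N (x - xs m) ^ α)) p
          ((volume {x : Fin d → ℝ | N x ≤ 1})⁻¹ •
            volume.restrict {x : Fin d → ℝ | N x ≤ 1})) ≤
      ENNReal.ofReal ((⨆ m : Fin M, ε m) + 3 * (M : ℝ) ^ (-(α / (d : ℝ)))) := by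
  haveI : Nonempty (Fin M) := ⟨⟨0, hM⟩⟩
  have hc := N_cont hNsmul hNadd
  have hnn := N_nonneg hNsmul hNadd
  have hV0 := N_vol_pos hN0 hc
  have hV1 := N_vol_fin hd hN0 hNsmul hnn hc
  have hMpos : (0 : ℝ) < M := by exact_mod_cast hM
  have hdpos : (0 : ℝ) < d := by exact_mod_cast hd
  have hd1 : (1 : ℝ) ≤ d := by exact_mod_cast hd
  set V := volume {x : Fin d → ℝ | N x ≤ 1} with hV
  set μ := V⁻¹ • volume.restrict {x : Fin d → ℝ | N x ≤ 1} with hμ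
  haveI hprob : IsProbabilityMeasure μ := ⟨by
    simp [hμ, ← hV, ENNReal.inv_mul_cancel hV0 hV1]⟩
  have hXm : MeasurableSet {x : Fin d → ℝ | N x ≤ 1} :=
    (isClosed_le hc continuous_const).measurableSet
  have hmeas1 : ∀ c : Fin d → ℝ, Measurable fun x => N (x - c) ^ α := fun c =>
    ((hc.comp (continuous_id.sub continuous_const)).measurable).pow_const α
  have hpw : ∀ x c : Fin d → ℝ, 0 ≤ N (x - c) ^ α := fun x c => Real.rpow_nonneg (hnn _) _
  have hbdd : ∀ f : Fin M → ℝ, BddBelow (Set.range f) := fun f => (Set.finite_range f).bddBelow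
  have hbdd' : ∀ f : Fin M → ℝ, BddAbove (Set.range f) := fun f => (Set.finite_range f).bddAbove
  constructor
  · refine le_iInf₂ fun xs hxs => ?_
    have hum : Measurable fun x => ⨅ m : Fin M, (ε m + N (x - xs m) ^ α) :=
      Measurable.iInf fun m => (hmeas1 (xs m)).const_add _
    have hgm : Measurable fun x => ⨅ m : Fin M, N (x - xs m) ^ α :=
      Measurable.iInf fun m => hmeas1 (xs m)
    refine le_trans ?_ (eLpNorm_le_eLpNorm_of_exponent_le hp hum.aestronglyMeasurable)
    rw [eLpNorm_one_eq_lintegral_enorm]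
    have hε0 : 0 ≤ ⨅ m, ε m := Real.iInf_nonneg hε
    set s : ℝ := (M : ℝ) ^ (-(α / (d : ℝ))) with hs
    have hspos : 0 < s := Real.rpow_pos_of_pos hMpos _
    have key : ENNReal.ofReal (s / 2) ≤
        ∫⁻ x, ENNReal.ofReal (⨅ m : Fin M, N (x - xs m) ^ α) ∂μ := by
      refine lower_aux μ _ hgm (fun x => Real.iInf_nonneg fun m => hpw _ _) s hspos ?_
      intro t ht hts
      have hsub : {x | (⨅ m : Fin M, N (x - xs m) ^ α) ≤ t} ⊆
          ⋃ m, {x | N (x - xs m) ≤ t ^ (1 / α)} := by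
        intro x hx
        have hx : (⨅ m : Fin M, N (x - xs m) ^ α) ≤ t := hx
        obtain ⟨m, hm⟩ := exists_eq_ciInf_of_finite (f := fun m : Fin M => N (x - xs m) ^ α)
        rw [← hm] at hx
        refine Set.mem_iUnion.2 ⟨m, ?_⟩
        have := Real.rpow_le_rpow (hpw _ _) hx (by positivity : 0 ≤ 1 / α)
        rwa [← Real.rpow_mul (hnn _), mul_one_div_cancel hα.ne', Real.rpow_one] at this
      have hball : ∀ m, μ {x | N (x - xs m) ≤ t ^ (1 / α)} ≤
          ENNReal.ofReal ((t ^ (1 / α)) ^ d) := by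
        intro m
        rw [hμ, Measure.smul_apply, smul_eq_mul]
        calc _ ≤ V⁻¹ * volume {x | N (x - xs m) ≤ t ^ (1 / α)} := by
              exact mul_le_mul_right (Measure.restrict_apply_le _ _) _
          _ = _ := by
              rw [N_vol_ball hNsmul _ _ (by positivity), ← hV, mul_comm, mul_assoc,
                ENNReal.mul_inv_cancel hV0 hV1, mul_one]
      refine (measure_mono hsub).trans ((measure_iUnion_fintype_le _ _).trans
        ((Finset.sum_le_sum fun m _ => hball m).trans ?_))
      rw [Finset.sum_const, Finset.card_univ, Fintype.card_fin, nsmul_eq_mul,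
        ← ENNReal.ofReal_natCast, ← ENNReal.ofReal_mul (by positivity)]
      apply ENNReal.ofReal_le_ofReal
      have hMs : (M : ℝ) = (s ^ (d / α))⁻¹ := by
        rw [hs, ← Real.rpow_mul hMpos.le, ← Real.rpow_neg hMpos.le]
        rw [show -(-(α / (d:ℝ)) * (d / α)) = 1 by field_simp, Real.rpow_one]
      rw [← Real.rpow_natCast, ← Real.rpow_mul ht.le, one_div_mul_eq_div, hMs, inv_mul_eq_div,
        ← Real.div_rpow ht.le hspos.le]
      have h1 : t / s ≤ 1 := (div_le_one hspos).2 hts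
      have h2 : 1 ≤ d / α := (one_le_div hα).2 (hα1.trans hd1)
      calc (t / s) ^ (d / α) ≤ (t / s) ^ (1 : ℝ) :=
            Real.rpow_le_rpow_of_exponent_ge (by positivity) h1 h2
        _ = _ := Real.rpow_one _
    calc ENNReal.ofReal ((⨅ m : Fin M, ε m) + (1 / 2) * s)
        = ENNReal.ofReal (⨅ m : Fin M, ε m) + ENNReal.ofReal (s / 2) := by
          rw [← ENNReal.ofReal_add hε0 (by positivity)]; congr 1; ring
      _ ≤ ENNReal.ofReal (⨅ m : Fin M, ε m) +
          ∫⁻ x, ENNReal.ofReal (⨅ m : Fin M, N (x - xs m) ^ α) ∂μ := by gcongr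
      _ = ∫⁻ x, (ENNReal.ofReal (⨅ m : Fin M, ε m) +
          ENNReal.ofReal (⨅ m : Fin M, N (x - xs m) ^ α)) ∂μ := by
          rw [lintegral_add_left measurable_const]; simp
      _ ≤ _ := by
          refine lintegral_mono fun x => ?_
          rw [← ENNReal.ofReal_add hε0 (Real.iInf_nonneg fun m => hpw _ _),
            ← ofReal_norm]
          apply ENNReal.ofReal_le_ofReal
          refine le_trans ?_ (le_abs_self _)
          exact le_ciInf fun m => add_le_add (ciInf_le (hbdd _) m) (ciInf_le (hbdd _) m)
  · set r : ℝ := 3 * (M : ℝ) ^ (-(1 / (d : ℝ))) with hr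
    have hrpos : 0 < r := by positivity
    have hrM : r ^ d * M = 3 ^ d := by
      rw [hr, mul_pow, ← Real.rpow_natCast (_ ^ _), ← Real.rpow_mul hMpos.le,
        show -(1 / (d:ℝ)) * d = -1 by field_simp, Real.rpow_neg_one]
      field_simp
    obtain ⟨xs, hxs, hcov⟩ := covering hd hN0 hNsmul hNadd M hM r hrpos hrM
    refine (iInf₂_le xs hxs).trans ?_
    refine (eLpNorm_le_of_ae_bound (C := (⨆ m : Fin M, ε m) + 3 * (M : ℝ) ^ (-(α / (d : ℝ))))
      ?_).trans (by simp)
    have hae : ∀ᵐ x ∂μ, N x ≤ 1 := Measure.ae_smul_measure (ae_restrict_mem hXm) _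
    filter_upwards [hae] with x hx
    obtain ⟨m, hm⟩ := hcov x hx
    rw [Real.norm_of_nonneg (Real.iInf_nonneg fun m => add_nonneg (hε m) (hpw _ _))]
    refine (ciInf_le (hbdd _) m).trans (add_le_add (le_ciSup (hbdd' ε) m) ?_)
    calc N (x - xs m) ^ α ≤ r ^ α := Real.rpow_le_rpow (hnn _) hm hα.le
      _ = 3 ^ α * (M : ℝ) ^ (-(α / (d : ℝ))) := by
        rw [hr, Real.mul_rpow (by norm_num) (by positivity), ← Real.rpow_mul hMpos.le]
        congr 2; field_simp
      _ ≤ _ := by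
        gcongr
        calc (3 : ℝ) ^ α ≤ 3 ^ (1 : ℝ) := Real.rpow_le_rpow_of_exponent_le (by norm_num) hα1
          _ = 3 := Real.rpow_one _
end

section
/- Equip ℝ^d with the ℓ∞-norm, so X = [−1,1]^d, let μ be Lebesgue measure on X normalized so μ(X) = 1, let α ∈ (0,1], let ε ≥ 0 be a common accuracy, and let p ∈ [1,∞). Then for any datasites x⁽¹⁾,…,x⁽ᴹ⁾ ∈ X, ∫_X ( ε + min_{1≤m≤M} ‖x − x⁽ᵐ⁾‖_∞^α )^p dμ(x) ≥ (ε + M^{−α/d})^p − M ∫_{ε^p}^{(ε + M^{−α/d})^p} (t^{1/p} − ε)^{d/α} dt. -/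
open MeasureTheory

theorem aux_layer {Ω : Type*} [MeasurableSpace Ω] (μ : Measure Ω) [IsProbabilityMeasure μ]
    (f : Ω → ℝ) (hf : Integrable f μ) (a R : ℝ) (ha : 0 ≤ a) (haR : a ≤ R)
    (hfa : ∀ x, a ≤ f x) (hm : Measurable f) (k : ℝ → ℝ) (hk : IntervalIntegrable k volume a R)
    (hb : ∀ t ∈ Set.Ioc a R, μ.real {x | f x < t} ≤ k t) :
    R - ∫ t in a..R, k t ≤ ∫ x, f x ∂μ := by
  have hg : Integrable (fun x => min (f x) R) μ := hf.inf (integrable_const R)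
  have h1 : ∫ x, min (f x) R ∂μ ≤ ∫ x, f x ∂μ :=
    integral_mono hg hf (fun x => min_le_left _ _)
  refine le_trans ?_ h1
  have hR : 0 ≤ R := ha.trans haR
  rw [hg.integral_eq_integral_Ioc_meas_le (M := R)
    (Filter.Eventually.of_forall fun x => le_min (ha.trans (hfa x)) hR)
    (Filter.Eventually.of_forall fun x => min_le_right _ _)]
  rw [← intervalIntegral.integral_of_le hR]
  have hanti : Antitone (fun t => μ.real {x | t ≤ min (f x) R}) := by
    intro s t hst
    exact measureReal_mono (fun x (hx : t ≤ _) => hst.trans hx)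
  have hi : ∀ b c, IntervalIntegrable (fun t => μ.real {x | t ≤ min (f x) R}) volume b c :=
    fun b c => hanti.intervalIntegrable
  rw [← intervalIntegral.integral_add_adjacent_intervals (hi 0 a) (hi a R)]
  have h2 : a ≤ ∫ t in (0:ℝ)..a, μ.real {x | t ≤ min (f x) R} := by
    have : ∫ t in (0:ℝ)..a, (1:ℝ) ≤ ∫ t in (0:ℝ)..a, μ.real {x | t ≤ min (f x) R} := by
      apply intervalIntegral.integral_mono_on ha (by simp) (hi _ _)
      intro t ht
      have : {x | t ≤ min (f x) R} = Set.univ := by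
        ext x
        simp only [Set.mem_setOf_eq, Set.mem_univ, iff_true]
        exact le_min (ht.2.trans (hfa x)) (ht.2.trans haR)
      rw [this]; simp
    simpa using this
  have h3 : (R - a) - ∫ t in a..R, k t ≤ ∫ t in a..R, μ.real {x | t ≤ min (f x) R} := by
    have : ∫ t in a..R, (1 - k t) ≤ ∫ t in a..R, μ.real {x | t ≤ min (f x) R} := by
      apply intervalIntegral.integral_mono_on_of_le_Ioo haR
        (intervalIntegrable_const.sub hk) (hi _ _)
      intro t ht
      have h4 := hb t ⟨ht.1, ht.2.le⟩
      have h5 : {x | t ≤ min (f x) R} = {x | f x < t}ᶜ := by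
        ext x
        simp [ht.2.le]
      rw [h5, probReal_compl_eq_one_sub (measurableSet_lt hm measurable_const)]
      linarith
    rw [intervalIntegral.integral_sub intervalIntegrable_const hk] at this
    simpa using this
  linarith

theorem aux_ball (d : ℕ) (c : Fin d → ℝ) (r : ℝ) (hr : 0 ≤ r) :
    ((volume (Set.Icc (fun _ => (-1 : ℝ)) (fun _ => (1 : ℝ)) : Set (Fin d → ℝ)))⁻¹ •
      (volume : Measure (Fin d → ℝ)).restrict
        (Set.Icc (fun _ => (-1 : ℝ)) (fun _ => (1 : ℝ)))).real
      (Metric.closedBall c r) ≤ r ^ d := by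
  have hv : volume (Set.Icc (fun _ => (-1 : ℝ)) (fun _ => (1 : ℝ)) : Set (Fin d → ℝ))
      = ENNReal.ofReal (2 ^ d) := by
    rw [Real.volume_Icc_pi]
    norm_num
  rw [measureReal_ennreal_smul_apply, hv]
  have h1 : ((volume : Measure (Fin d → ℝ)).restrict
        (Set.Icc (fun _ => (-1 : ℝ)) (fun _ => (1 : ℝ)))).real (Metric.closedBall c r)
        ≤ (2 * r) ^ d := by
    rw [measureReal_def]
    apply ENNReal.toReal_le_of_le_ofReal (by positivity)
    refine (Measure.restrict_apply_le _ _).trans ?_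
    rw [Real.volume_pi_closedBall _ hr]
    simp
  rw [ENNReal.toReal_inv, ENNReal.toReal_ofReal (by positivity)]
  calc _ ≤ ((2:ℝ) ^ d)⁻¹ * (2 * r) ^ d := by gcongr
    _ = r ^ d := by rw [mul_pow]; field_simp

/-- For `X = [-1,1]^d` (unit ball of the `ℓ∞`-norm on `ℝ^d`) with normalized
Lebesgue measure, common accuracy `ε ≥ 0` and `p ∈ [1,∞)`, for any datasites in `X`,
`∫_X (ε + min_m ‖x - x⁽ᵐ⁾‖_∞^α)^p dμ ≥ (ε + M^(-α/d))^p
  - M ∫_{ε^p}^{(ε + M^(-α/d))^p} (t^(1/p) - ε)^(d/α) dt`. -/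
theorem stmt17 (d : ℕ) (hd : 0 < d)
    (α : ℝ) (hα : 0 < α) (hα1 : α ≤ 1)
    (ε : ℝ) (hε : 0 ≤ ε) (p : ℝ) (hp : 1 ≤ p)
    (M : ℕ) (hM : 0 < M)
    (xs : Fin M → (Fin d → ℝ))
    (hxs : ∀ m, xs m ∈ Set.Icc (fun _ => (-1 : ℝ)) (fun _ => (1 : ℝ))) :
    (ε + (M : ℝ) ^ (-(α / (d : ℝ)))) ^ p -
        (M : ℝ) * ∫ t in (ε ^ p)..((ε + (M : ℝ) ^ (-(α / (d : ℝ)))) ^ p),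
          (t ^ (1 / p) - ε) ^ ((d : ℝ) / α) ≤
      ∫ x, (ε + ⨅ m : Fin M, ‖x - xs m‖ ^ α) ^ p
        ∂((volume (Set.Icc (fun _ => (-1 : ℝ)) (fun _ => (1 : ℝ)) : Set (Fin d → ℝ)))⁻¹ •
          volume.restrict (Set.Icc (fun _ => (-1 : ℝ)) (fun _ => (1 : ℝ)))) := by
  have : Nonempty (Fin M) := ⟨⟨0, hM⟩⟩
  have hv : volume (Set.Icc (fun _ => (-1 : ℝ)) (fun _ => (1 : ℝ)) : Set (Fin d → ℝ))
      = ENNReal.ofReal (2 ^ d) := by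
    rw [Real.volume_Icc_pi]
    norm_num
  set μ : Measure (Fin d → ℝ) :=
    ((volume (Set.Icc (fun _ => (-1 : ℝ)) (fun _ => (1 : ℝ)) : Set (Fin d → ℝ)))⁻¹ •
          volume.restrict (Set.Icc (fun _ => (-1 : ℝ)) (fun _ => (1 : ℝ)))) with hμ
  have hprob : IsProbabilityMeasure μ := by
    constructor
    rw [hμ, Measure.smul_apply, Measure.restrict_apply_univ, smul_eq_mul]
    apply ENNReal.inv_mul_cancel
    · rw [hv]; simp
    · rw [hv]; simp
  have hp0 : 0 < p := by linarith
  have hd0 : (0:ℝ) < d := by exact_mod_cast hd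
  have hinf : ∀ x : Fin d → ℝ, 0 ≤ ⨅ m : Fin M, ‖x - xs m‖ ^ α :=
    fun x => Real.iInf_nonneg fun m => by positivity
  have hcont : Continuous (fun x : Fin d → ℝ => ⨅ m : Fin M, ‖x - xs m‖ ^ α) := by
    have h : (fun x : Fin d → ℝ => ⨅ m : Fin M, ‖x - xs m‖ ^ α) =
        fun x => Finset.univ.inf' Finset.univ_nonempty (fun m : Fin M => ‖x - xs m‖ ^ α) := by
      ext x
      rw [Finset.inf'_univ_eq_ciInf]
    rw [h]
    apply Continuous.finset_inf'_apply
    intro m _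
    exact ((continuous_id.sub continuous_const).norm).rpow_const (fun _ => Or.inr hα.le)
  have hfc : Continuous (fun x : Fin d → ℝ => (ε + ⨅ m : Fin M, ‖x - xs m‖ ^ α) ^ p) :=
    (continuous_const.add hcont).rpow_const (fun _ => Or.inr hp0.le)
  have hfi : Integrable (fun x : Fin d → ℝ => (ε + ⨅ m : Fin M, ‖x - xs m‖ ^ α) ^ p) μ := by
    apply Integrable.smul_measure
    · exact hfc.continuousOn.integrableOn_compact isCompact_Icc
    · rw [hv]; simp
  have hq : 0 ≤ (M : ℝ) ^ (-(α / (d : ℝ))) := by positivity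
  have hkc : Continuous (fun t : ℝ => (M:ℝ) * (t ^ (1 / p) - ε) ^ ((d : ℝ) / α)) := by
    refine continuous_const.mul (Continuous.rpow_const ?_ (fun _ => Or.inr (by positivity)))
    exact (continuous_id.rpow_const (fun _ => Or.inr (by positivity))).sub continuous_const
  rw [← intervalIntegral.integral_const_mul]
  refine aux_layer μ _ hfi (ε ^ p) _ (by positivity)
    (Real.rpow_le_rpow hε (by linarith) hp0.le) ?_ hfc.measurable _
    (hkc.intervalIntegrable _ _) ?_
  · intro x
    exact Real.rpow_le_rpow hε (by linarith [hinf x]) hp0.le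
  · intro t ht
    have ht0 : 0 ≤ t := (Real.rpow_nonneg hε p).trans ht.1.le
    have hs : 0 ≤ t ^ (1 / p) - ε := by
      have := Real.rpow_le_rpow (Real.rpow_nonneg hε p) ht.1.le (by positivity : 0 ≤ 1 / p)
      rw [one_div, Real.rpow_rpow_inv hε hp0.ne'] at this
      rw [one_div]
      linarith
    have hsub : {x : Fin d → ℝ | (ε + ⨅ m : Fin M, ‖x - xs m‖ ^ α) ^ p < t} ⊆
        ⋃ m : Fin M, Metric.closedBall (xs m) ((t ^ (1 / p) - ε) ^ (1 / α)) := by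
      intro x hx
      obtain ⟨m, hm⟩ := exists_eq_ciInf_of_finite (f := fun m : Fin M => ‖x - xs m‖ ^ α)
      rw [Set.mem_setOf_eq, ← hm] at hx
      rw [Set.mem_iUnion]
      refine ⟨m, ?_⟩
      rw [mem_closedBall_iff_norm]
      have hn : 0 ≤ ‖x - xs m‖ ^ α := by positivity
      have h1 := Real.rpow_le_rpow (by positivity) hx.le (by positivity : 0 ≤ 1 / p)
      have h2 : ((ε + ‖x - xs m‖ ^ α) ^ p) ^ (1 / p) = ε + ‖x - xs m‖ ^ α := by
        rw [one_div, Real.rpow_rpow_inv (by positivity) hp0.ne']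
      have h1' : ‖x - xs m‖ ^ α ≤ t ^ (1 / p) - ε := by
        have h3 := h2.symm.le.trans h1
        linarith
      have h4 := Real.rpow_le_rpow hn h1' (by positivity : 0 ≤ 1 / α)
      have h5 : (‖x - xs m‖ ^ α) ^ (1 / α) = ‖x - xs m‖ := by
        rw [one_div, Real.rpow_rpow_inv (norm_nonneg _) hα.ne']
      exact h5.symm.le.trans h4
    refine (measureReal_mono hsub).trans ((measureReal_iUnion_fintype_le _).trans ?_)
    refine (Finset.sum_le_sum fun m _ => aux_ball d (xs m) _ (Real.rpow_nonneg hs _)).trans ?_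
    rw [Finset.sum_const, Finset.card_univ, Fintype.card_fin, nsmul_eq_mul,
      ← Real.rpow_natCast, ← Real.rpow_mul hs, one_div_mul_eq_div]
end

section
/- Equip ℝ^d with the ℓ∞-norm, so X = [−1,1]^d with normalized Lebesgue measure μ (μ(X) = 1), let α ∈ (0,1], ε ≥ 0, p ∈ [1,∞), and suppose M = N^d for an integer N ≥ 1. If x⁽¹⁾,…,x⁽ᴹ⁾ are the centers of the N^d congruent subcubes of side 2/N partitioning [−1,1]^d, then ∫_X ( ε + min_{1≤m≤M} ‖x − x⁽ᵐ⁾‖_∞^α )^p dμ(x) = (ε + M^{−α/d})^p − M ∫_{ε^p}^{(ε + M^{−α/d})^p} (t^{1/p} − ε)^{d/α} dt; in particular the lower bound over all datasites is attained. -/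
open MeasureTheory

lemma cover1 (N : ℕ) (hN : 0 < N) (x : ℝ) (h1 : -1 ≤ x) (h2 : x ≤ 1) :
    ∃ k : Fin N, |x - ((2 * ((k : ℕ) : ℝ) + 1) / (N : ℝ) - 1)| ≤ 1 / (N : ℝ) := by
  have hN' : (0 : ℝ) < N := by exact_mod_cast hN
  have key : ∃ k : Fin N, ((k : ℕ) : ℝ) ≤ (x + 1) * N / 2 ∧ (x + 1) * N / 2 ≤ (k : ℕ) + 1 := by
    by_cases hx : x = 1
    · refine ⟨⟨N - 1, by omega⟩, ?_⟩
      subst hx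
      have : ((N - 1 : ℕ) : ℝ) = N - 1 := by push_cast [Nat.cast_sub hN]; ring
      simp only [this]
      constructor <;> linarith
    · have hx' : x < 1 := lt_of_le_of_ne h2 hx
      have h0 : 0 ≤ (x + 1) * N / 2 := by
        have : 0 ≤ x + 1 := by linarith
        positivity
      refine ⟨⟨⌊(x + 1) * N / 2⌋₊, ?_⟩, Nat.floor_le h0, (Nat.lt_floor_add_one _).le⟩
      rw [Nat.floor_lt h0]
      nlinarith
  obtain ⟨k, hk1, hk2⟩ := key
  refine ⟨k, ?_⟩
  have : x - ((2 * ((k : ℕ) : ℝ) + 1) / (N : ℝ) - 1)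
      = ((x + 1) * N - 2 * ((k : ℕ) : ℝ) - 1) / N := by
    field_simp
    ring
  rw [this, abs_div, abs_of_pos hN']
  gcongr
  rw [abs_le]
  constructor <;> linarith

lemma sep1 (N : ℕ) (hN : 0 < N) (k l : Fin N) (h : k ≠ l) :
    1 / (N : ℝ) + 1 / N ≤
      |((2 * ((k : ℕ) : ℝ) + 1) / (N : ℝ) - 1) - ((2 * ((l : ℕ) : ℝ) + 1) / (N : ℝ) - 1)| := by
  have hN' : (0 : ℝ) < N := by exact_mod_cast hN
  have : ((2 * ((k : ℕ) : ℝ) + 1) / (N : ℝ) - 1) - ((2 * ((l : ℕ) : ℝ) + 1) / (N : ℝ) - 1)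
      = (2 * (((k : ℕ) : ℝ) - (l : ℕ))) / N := by
    field_simp
    ring
  rw [this, abs_div, abs_of_pos hN', ← add_div]
  gcongr
  have h' : (k : ℕ) ≠ l := fun h' => h (Fin.ext h')
  rw [le_abs]
  rcases lt_or_gt_of_ne h' with h' | h'
  · right
    have : ((k : ℕ) : ℝ) + 1 ≤ (l : ℕ) := by exact_mod_cast h'
    linarith
  · left
    have : ((l : ℕ) : ℝ) + 1 ≤ (k : ℕ) := by exact_mod_cast h'
    linarith

lemma sub1 (N : ℕ) (hN : 0 < N) (k : Fin N) (x : ℝ)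
    (h : |x - ((2 * ((k : ℕ) : ℝ) + 1) / (N : ℝ) - 1)| ≤ 1 / (N : ℝ)) : -1 ≤ x ∧ x ≤ 1 := by
  have hN' : (0 : ℝ) < N := by exact_mod_cast hN
  have hk : ((k : ℕ) : ℝ) + 1 ≤ N := by exact_mod_cast k.2
  have hk0 : (0 : ℝ) ≤ ((k : ℕ) : ℝ) := by positivity
  have e : ((2 * ((k : ℕ) : ℝ) + 1) / (N : ℝ)) = 2 * ((k : ℕ) / (N : ℝ)) + 1 / N := by ring
  rw [e, abs_le] at h
  have a1 : 0 ≤ ((k : ℕ) : ℝ) / N := by positivity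
  have a2 : ((k : ℕ) : ℝ) / N + 1 / N ≤ 1 := by
    rw [← add_div, div_le_one hN']; exact hk
  constructor <;> linarith [h.1, h.2]

lemma volQ (d : ℕ) :
    volume (Set.Icc (fun _ => (-1 : ℝ)) (fun _ => (1 : ℝ)) : Set (Fin d → ℝ)) = 2 ^ d := by
  rw [Real.volume_Icc_pi]
  norm_num

/-- measure of the union of balls -/
lemma ball_meas (d : ℕ) (N : ℕ) (hN : 0 < N)
    (xs : Fin (N ^ d) → (Fin d → ℝ))
    (hxs : ∃ e : Fin (N ^ d) ≃ (Fin d → Fin N),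
      ∀ m, xs m = fun i => (2 * ((e m i : ℕ) : ℝ) + 1) / (N : ℝ) - 1)
    (r : ℝ) (hr : 0 < r) (hrN : r ≤ 1 / N) :
    ((volume (Set.Icc (fun _ => (-1 : ℝ)) (fun _ => (1 : ℝ)) : Set (Fin d → ℝ)))⁻¹ •
          volume.restrict (Set.Icc (fun _ => (-1 : ℝ)) (fun _ => (1 : ℝ)))).real
      (⋃ m, Metric.ball (xs m) r) = ((N ^ d : ℕ) : ℝ) * r ^ d := by
  obtain ⟨e, he⟩ := hxs
  have hsub : (⋃ m, Metric.ball (xs m) r) ⊆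
      Set.Icc (fun _ => (-1 : ℝ)) (fun _ => (1 : ℝ)) := by
    intro x hx
    obtain ⟨m, hm⟩ := Set.mem_iUnion.1 hx
    rw [Metric.mem_ball, dist_eq_norm] at hm
    have hc : ∀ i, -1 ≤ x i ∧ x i ≤ 1 := by
      intro i
      apply sub1 N hN (e m i)
      have := norm_le_pi_norm (x - xs m) i
      rw [Pi.sub_apply, he m, Real.norm_eq_abs] at this
      rw [he m] at hm
      linarith
    exact ⟨fun i => (hc i).1, fun i => (hc i).2⟩
  have hdisj : Pairwise (Function.onFun Disjoint fun m => Metric.ball (xs m) r) := by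
    intro m m' hmm
    apply Metric.ball_disjoint_ball
    have : e m ≠ e m' := fun h => hmm (e.injective h)
    obtain ⟨i, hi⟩ := Function.ne_iff.1 this
    have h1 := sep1 N hN _ _ hi
    have h2 := norm_le_pi_norm (xs m - xs m') i
    rw [Pi.sub_apply, Real.norm_eq_abs] at h2
    rw [dist_eq_norm]
    have h3 : xs m i - xs m' i = ((2 * ((e m i : ℕ) : ℝ) + 1) / (N : ℝ) - 1)
      - ((2 * ((e m' i : ℕ) : ℝ) + 1) / (N : ℝ) - 1) := by rw [he m, he m']
    rw [h3] at h2
    linarith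
  have hmeas : MeasurableSet (⋃ m, Metric.ball (xs m) r) :=
    MeasurableSet.iUnion fun m => measurableSet_ball
  rw [measureReal_ennreal_smul_apply, measureReal_restrict_apply hmeas,
    Set.inter_eq_left.2 hsub, measureReal_iUnion_fintype hdisj (fun m => measurableSet_ball)
      (fun m => measure_ball_lt_top.ne), volQ]
  have : ∀ m, volume.real (Metric.ball (xs m) r) = (2 * r) ^ d := by
    intro m
    rw [measureReal_def, Real.volume_pi_ball _ hr, ENNReal.toReal_ofReal (by positivity)]
    simp
  simp only [this, Finset.sum_const, Finset.card_univ, Fintype.card_fin, nsmul_eq_mul]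
  simp only [ENNReal.toReal_inv, ENNReal.toReal_pow, ENNReal.toReal_ofNat]
  rw [mul_pow]
  field_simp

/-- For `X = [-1,1]^d` with the `ℓ∞`-norm and normalized Lebesgue measure, if
`M = N^d` and the datasites are the centers of the `N^d` congruent subcubes of side `2/N`
partitioning `[-1,1]^d`, then the lower bound of Statement 17 is attained with equality. -/
theorem stmt18 (d : ℕ) (hd : 0 < d)
    (α : ℝ) (hα : 0 < α) (hα1 : α ≤ 1)
    (ε : ℝ) (hε : 0 ≤ ε) (p : ℝ) (hp : 1 ≤ p)
    (N : ℕ) (hN : 0 < N)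
    (xs : Fin (N ^ d) → (Fin d → ℝ))
    (hxs : ∃ e : Fin (N ^ d) ≃ (Fin d → Fin N),
      ∀ m, xs m = fun i => (2 * ((e m i : ℕ) : ℝ) + 1) / (N : ℝ) - 1) :
    ∫ x, (ε + ⨅ m : Fin (N ^ d), ‖x - xs m‖ ^ α) ^ p
        ∂((volume (Set.Icc (fun _ => (-1 : ℝ)) (fun _ => (1 : ℝ)) : Set (Fin d → ℝ)))⁻¹ •
          volume.restrict (Set.Icc (fun _ => (-1 : ℝ)) (fun _ => (1 : ℝ)))) =
      (ε + ((N ^ d : ℕ) : ℝ) ^ (-(α / (d : ℝ)))) ^ p -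
        ((N ^ d : ℕ) : ℝ) *
          ∫ t in (ε ^ p)..((ε + ((N ^ d : ℕ) : ℝ) ^ (-(α / (d : ℝ)))) ^ p),
            (t ^ (1 / p) - ε) ^ ((d : ℝ) / α) := by
  have hN' : (0 : ℝ) < N := by exact_mod_cast hN
  have hd' : (0 : ℝ) < d := by exact_mod_cast hd
  have hp0 : 0 < p := by linarith
  have hMα : ((N ^ d : ℕ) : ℝ) ^ (-(α / (d : ℝ))) = (1 / (N : ℝ)) ^ α := by
    rw [one_div, Real.inv_rpow hN'.le, ← Real.rpow_neg hN'.le]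
    push_cast
    rw [← Real.rpow_natCast, ← Real.rpow_mul hN'.le]
    congr 1
    field_simp
  rw [hMα]
  set R : ℝ := (1 / (N : ℝ)) ^ α with hR
  have hRpos : 0 < R := by positivity
  set T : ℝ := (ε + R) ^ p with hT
  have hεT : ε ^ p ≤ T := Real.rpow_le_rpow hε (by linarith) hp0.le
  have hε0 : 0 ≤ ε ^ p := Real.rpow_nonneg hε _
  set ν : Measure (Fin d → ℝ) :=
    ((volume (Set.Icc (fun _ => (-1 : ℝ)) (fun _ => (1 : ℝ)) : Set (Fin d → ℝ)))⁻¹ •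
          volume.restrict (Set.Icc (fun _ => (-1 : ℝ)) (fun _ => (1 : ℝ)))) with hν
  have hprob : IsProbabilityMeasure ν := by
    constructor
    rw [hν, Measure.smul_apply, Measure.restrict_apply_univ, smul_eq_mul, volQ]
    exact ENNReal.inv_mul_cancel (by simp) (by simp)
  have hne : Nonempty (Fin (N ^ d)) := ⟨⟨0, by positivity⟩⟩
  set D : (Fin d → ℝ) → ℝ := fun x => ⨅ m : Fin (N ^ d), ‖x - xs m‖ ^ α with hD
  have hbdd : ∀ x, BddBelow (Set.range fun m : Fin (N ^ d) => ‖x - xs m‖ ^ α) :=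
    fun x => (Set.finite_range _).bddBelow
  have hD0 : ∀ x, 0 ≤ D x := fun x => Real.iInf_nonneg fun m => by positivity
  have hDm : Measurable D := by
    apply Measurable.iInf
    intro m
    fun_prop
  set u : (Fin d → ℝ) → ℝ := fun x => (ε + D x) ^ p with hu
  have hum : Measurable u := by
    rw [hu]; fun_prop
  have hu0 : ∀ x, ε ^ p ≤ u x := fun x =>
    Real.rpow_le_rpow hε (by linarith [hD0 x]) hp0.le
  have hDR : ∀ x ∈ (Set.Icc (fun _ => (-1 : ℝ)) (fun _ => (1 : ℝ)) : Set (Fin d → ℝ)),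
      D x ≤ R := by
    obtain ⟨e, he⟩ := hxs
    intro x hx
    choose k hk using fun i => cover1 N hN (x i) (hx.1 i) (hx.2 i)
    refine (ciInf_le (hbdd x) (e.symm k)).trans ?_
    apply Real.rpow_le_rpow (norm_nonneg _) _ hα.le
    rw [pi_norm_le_iff_of_nonneg (by positivity)]
    intro i
    rw [Pi.sub_apply, he, Real.norm_eq_abs]
    simpa using hk i
  have hac : ν ≪ volume.restrict (Set.Icc (fun _ => (-1 : ℝ)) (fun _ => (1 : ℝ))) :=
    Measure.smul_absolutelyContinuous
  have huT : ∀ᵐ x ∂ν, u x ≤ T := by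
    apply hac.ae_le
    filter_upwards [ae_restrict_mem measurableSet_Icc] with x hx
    exact Real.rpow_le_rpow (by linarith [hD0 x]) (by linarith [hDR x hx]) hp0.le
  have hint : Integrable u ν := by
    apply Integrable.of_bound hum.aestronglyMeasurable T
    filter_upwards [huT] with x hx
    rwa [Real.norm_eq_abs, abs_of_nonneg (hε0.trans (hu0 x))]
  have hmain := hint.integral_eq_integral_Ioc_meas_le (M := T)
    (Filter.Eventually.of_forall fun x => hε0.trans (hu0 x)) huT
  change ∫ x, u x ∂ν = _
  rw [hmain]
  set h : ℝ → ℝ := fun t => (t ^ (1 / p) - ε) ^ ((d : ℝ) / α) with hh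
  have hcont : Continuous h := by
    apply Continuous.rpow_const
    · exact (Real.continuous_rpow_const (by positivity)).sub continuous_const
    · intro x; right; positivity
  have c1 : ∀ t ∈ Set.uIoc 0 (ε ^ p), ν.real {a | t ≤ u a} = 1 := by
    intro t ht
    rw [Set.uIoc_of_le hε0] at ht
    have : {a | t ≤ u a} = Set.univ := Set.eq_univ_of_forall fun a => ht.2.trans (hu0 a)
    rw [this, probReal_univ]
  have c2 : ∀ t ∈ Set.uIoc (ε ^ p) T, ν.real {a | t ≤ u a} = 1 - ((N ^ d : ℕ) : ℝ) * h t := by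
    intro t ht
    rw [Set.uIoc_of_le hεT] at ht
    have ht0 : 0 ≤ t := hε0.trans ht.1.le
    have e1 : {a | t ≤ u a} = {a | u a < t}ᶜ := by ext a; simp
    rw [e1, probReal_compl_eq_one_sub (measurableSet_lt hum measurable_const)]
    congr 1
    have hs : 0 < t ^ (1 / p) - ε := by
      rw [one_div, sub_pos, Real.lt_rpow_inv_iff_of_pos hε ht0 hp0]
      exact ht.1
    have hsR : t ^ (1 / p) - ε ≤ R := by
      have : t ^ (1 / p) ≤ ε + R := by
        rw [one_div, Real.rpow_inv_le_iff_of_pos ht0 (by linarith) hp0]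
        exact ht.2
      linarith
    have e2 : {a | u a < t} = ⋃ m, Metric.ball (xs m) ((t ^ (1 / p) - ε) ^ α⁻¹) := by
      ext a
      simp only [Set.mem_ofPred_eq, Set.mem_iUnion, Metric.mem_ball, dist_eq_norm]
      rw [hu]
      simp only
      rw [← Real.lt_rpow_inv_iff_of_pos (by linarith [hD0 a]) ht0 hp0, ← one_div p,
        ← lt_sub_iff_add_lt', hD]
      simp only
      rw [ciInf_lt_iff (hbdd a)]
      apply exists_congr
      intro m
      rw [Real.lt_rpow_inv_iff_of_pos (norm_nonneg _) hs.le hα]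
    rw [e2, ball_meas d N hN xs hxs _ (by positivity)]
    · rw [hh]
      simp only
      rw [← Real.rpow_natCast, ← Real.rpow_mul hs.le]
      congr 2
      field_simp
    · rw [Real.rpow_inv_le_iff_of_pos hs.le (by positivity) hα]
      exact hsR
  rw [← intervalIntegral.integral_of_le (hε0.trans hεT)]
  have i1 : IntervalIntegrable (fun t => ν.real {a | t ≤ u a}) volume 0 (ε ^ p) :=
    (intervalIntegrable_const (c := (1 : ℝ))).congr fun t ht => (c1 t ht).symm
  have i3 : IntervalIntegrable (fun t => ((N ^ d : ℕ) : ℝ) * h t) volume (ε ^ p) T :=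
    (continuous_const.mul hcont).intervalIntegrable _ _
  have i2 : IntervalIntegrable (fun t => ν.real {a | t ≤ u a}) volume (ε ^ p) T :=
    ((intervalIntegrable_const (c := (1 : ℝ))).sub i3).congr fun t ht => (c2 t ht).symm
  rw [← intervalIntegral.integral_add_adjacent_intervals i1 i2,
    intervalIntegral.integral_congr_ae (Filter.Eventually.of_forall c1),
    intervalIntegral.integral_congr_ae (Filter.Eventually.of_forall c2),
    intervalIntegral.integral_sub intervalIntegrable_const i3,
    intervalIntegral.integral_const_mul]
  simp
  ring
end

section
/- Equip ℝ^d with the ℓ∞-norm, so X = [−1,1]^d with normalized Lebesgue measure μ (μ(X) = 1), let α ∈ (0,1] and p ∈ [1,∞). Then for any datasites x⁽¹⁾,…,x⁽ᴹ⁾ ∈ X, ( ∫_X ( min_{1≤m≤M} ‖x − x⁽ᵐ⁾‖_∞^α )^p dμ(x) )^{1/p} ≥ ( d/(d + αp) )^{1/p} · M^{−α/d}, and when M = N^d for an integer N ≥ 1 equality holds for the centers of the N^d congruent subcubes of side 2/N partitioning [−1,1]^d. -/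
open MeasureTheory

lemma aux_J (d : ℕ) (hd : 0 < d) (q : ℝ) (hq : 0 < q) (r : ℝ) (hr : 0 < r) :
    ∫ y : Fin d → ℝ, max (r ^ q - ‖y‖ ^ q) 0 = 2 ^ d * (r ^ d * r ^ q * (q / (d + q))) := by
  haveI : Nonempty (Fin d) := ⟨⟨0, hd⟩⟩
  have h := integral_fun_norm_addHaar (volume : Measure (Fin d → ℝ))
    (fun t : ℝ => max (r ^ q - t ^ q) 0)
  rw [h]
  have hv : (volume : Measure (Fin d → ℝ)).real (Metric.ball 0 1) = 2 ^ d := by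
    rw [Measure.real, Real.volume_pi_ball _ one_pos]
    simp
  have hdR : (0 : ℝ) < d := by exact_mod_cast hd
  have hI : ∫ y in Set.Ioi (0 : ℝ), y ^ (d - 1) • max (r ^ q - y ^ q) 0
      = r ^ d * r ^ q * (q / (d * (d + q))) := by
    have h1 : ∫ y in Set.Ioi (0 : ℝ), y ^ (d - 1) • max (r ^ q - y ^ q) 0
        = ∫ y in Set.Ioc (0 : ℝ) r, y ^ (d - 1) • max (r ^ q - y ^ q) 0 := by
      apply setIntegral_eq_of_subset_of_forall_sdiff_eq_zero measurableSet_Ioi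
      · exact Set.Ioc_subset_Ioi_self
      · rintro x ⟨hx, hx2⟩
        have : r < x := by
          by_contra hc
          exact hx2 ⟨hx, not_lt.1 hc⟩
        have := Real.rpow_le_rpow hr.le this.le hq.le
        rw [max_eq_right (by linarith), smul_zero]
    have h2 : ∫ y in Set.Ioc (0 : ℝ) r, y ^ (d - 1) • max (r ^ q - y ^ q) 0
        = ∫ y in Set.Ioc (0 : ℝ) r, (r ^ q * y ^ ((d : ℝ) - 1) - y ^ ((d : ℝ) - 1 + q)) := by
      apply setIntegral_congr_fun measurableSet_Ioc
      rintro x ⟨hx, hx2⟩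
      have := Real.rpow_le_rpow hx.le hx2 hq.le
      have e : x ^ (d - 1) = x ^ ((d : ℝ) - 1) := by
        rw [← Real.rpow_natCast, Nat.cast_sub hd, Nat.cast_one]
      simp only [smul_eq_mul]
      rw [max_eq_left (by linarith), e, Real.rpow_add hx]
      ring
    rw [h1, h2, ← intervalIntegral.integral_of_le hr.le, intervalIntegral.integral_sub,
      intervalIntegral.integral_const_mul, integral_rpow, integral_rpow]
    · have e1 : (d : ℝ) - 1 + 1 = d := by ring
      have e2 : (d : ℝ) - 1 + q + 1 = d + q := by ring
      rw [e1, e2, Real.zero_rpow hdR.ne', Real.zero_rpow (by positivity), Real.rpow_add hr,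
        Real.rpow_natCast]
      field_simp
      ring
    · left; linarith
    · left; linarith
    · exact (intervalIntegral.intervalIntegrable_rpow' (by linarith)).const_mul _
    · exact intervalIntegral.intervalIntegrable_rpow' (by linarith)
  rw [hv, Module.finrank_fintype_fun_eq_card, Fintype.card_fin, hI]
  simp only [smul_eq_mul, nsmul_eq_mul]
  field_simp

lemma aux_int_s19 (d : ℕ) (q : ℝ) (hq : 0 < q) (r : ℝ) (hr : 0 < r) (c : Fin d → ℝ) :
    Integrable (fun x : Fin d → ℝ => max (r ^ q - ‖x - c‖ ^ q) 0) := by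
  apply Continuous.integrable_of_hasCompactSupport
  · have : Continuous (fun x : Fin d → ℝ => ‖x - c‖ ^ q) :=
      Continuous.rpow_const (by fun_prop) (fun _ => Or.inr hq.le)
    fun_prop
  · apply HasCompactSupport.intro (isCompact_closedBall c r)
    intro x hx
    rw [Metric.mem_closedBall, dist_eq_norm, not_le] at hx
    have := Real.rpow_le_rpow hr.le hx.le hq.le
    exact max_eq_right (by linarith)

lemma aux_inf {d M : ℕ} (hM : 0 < M) (α p : ℝ) (hα : 0 < α) (hp : 1 ≤ p)
    (xs : Fin M → (Fin d → ℝ)) (x : Fin d → ℝ) :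
    ∃ k, (⨅ m : Fin M, ‖x - xs m‖ ^ α) ^ p = ‖x - xs k‖ ^ (α * p) ∧
      ∀ m, ‖x - xs k‖ ≤ ‖x - xs m‖ := by
  haveI : Nonempty (Fin M) := ⟨⟨0, hM⟩⟩
  obtain ⟨k, hk⟩ := exists_eq_ciInf_of_finite (f := fun m : Fin M => ‖x - xs m‖ ^ α)
  refine ⟨k, ?_, fun m => ?_⟩
  · rw [← hk, Real.rpow_mul (norm_nonneg _)]
  · have : ‖x - xs k‖ ^ α ≤ ‖x - xs m‖ ^ α := by
      have h := ciInf_le (Set.finite_range (fun m : Fin M => ‖x - xs m‖ ^ α)).bddBelow m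
      rw [← hk] at h
      exact h
    exact (Real.rpow_le_rpow_iff (norm_nonneg _) (norm_nonneg _) hα).1 this

lemma aux_vol_s19 (d : ℕ) : volume (Set.Icc (fun _ => (-1 : ℝ)) (fun _ => (1 : ℝ)) : Set (Fin d → ℝ))
    = ENNReal.ofReal (2 ^ d) := by
  rw [Real.volume_Icc_pi]
  norm_num [ENNReal.ofReal_pow]

lemma aux_vol' (d : ℕ) (f : (Fin d → ℝ) → ℝ) :
    ∫ x, f x ∂((volume (Set.Icc (fun _ => (-1 : ℝ)) (fun _ => (1 : ℝ)) : Set (Fin d → ℝ)))⁻¹ •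
            volume.restrict (Set.Icc (fun _ => (-1 : ℝ)) (fun _ => (1 : ℝ))))
     = (2 ^ d)⁻¹ * ∫ x in (Set.Icc (fun _ => (-1 : ℝ)) (fun _ => (1 : ℝ)) : Set (Fin d → ℝ)), f x := by
  rw [integral_smul_measure, aux_vol_s19, ENNReal.toReal_inv, ENNReal.toReal_ofReal (by positivity),
    smul_eq_mul]

lemma aux_fin (d : ℕ) (hd : 0 < d) (M : ℕ) (α p r : ℝ) (hα : 0 < α) (hp : 1 ≤ p) (hr : 0 < r)
    (hMr : (M : ℝ) * r ^ d = 1) :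
    ((d : ℝ) / ((d : ℝ) + α * p)) ^ (1 / p) * (M : ℝ) ^ (-(α / (d : ℝ))) =
      ((d : ℝ) / ((d : ℝ) + α * p) * r ^ (α * p)) ^ (1 / p) := by
  have hdR : (0 : ℝ) < d := by exact_mod_cast hd
  have hp0 : 0 < p := by linarith
  rw [Real.mul_rpow (by positivity) (by positivity), ← Real.rpow_mul hr.le]
  congr 1
  rw [eq_inv_of_mul_eq_one_left hMr, ← Real.rpow_natCast, ← Real.rpow_neg hr.le, ← Real.rpow_mul hr.le]
  congr 1
  field_simp

/-- the integral over X of r^q - sum -/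
lemma aux_sum (d : ℕ) (hd : 0 < d) (M : ℕ) (q r : ℝ) (hq : 0 < q) (hr : 0 < r)
    (hMr : (M : ℝ) * r ^ d = 1) (xs : Fin M → (Fin d → ℝ)) :
    (2 ^ d)⁻¹ * (2 ^ d * r ^ q - ∑ m, ∫ x, max (r ^ q - ‖x - xs m‖ ^ q) 0)
      = (d : ℝ) / (d + q) * r ^ q := by
  have hdR : (0 : ℝ) < d := by exact_mod_cast hd
  have : ∀ m, ∫ x, max (r ^ q - ‖x - xs m‖ ^ q) 0 = 2 ^ d * (r ^ d * r ^ q * (q / (d + q))) := by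
    intro m
    rw [integral_sub_right_eq_self (fun x => max (r ^ q - ‖x‖ ^ q) 0), aux_J d hd q hq r hr]
  simp only [this, Finset.sum_const, Finset.card_univ, Fintype.card_fin, nsmul_eq_mul]
  have e : (M : ℝ) * (2 ^ d * (r ^ d * r ^ q * (q / (d + q))))
     = 2 ^ d * (r ^ q * (q / (d + q))) := by
    calc _ = (M * r ^ d) * (2 ^ d * (r ^ q * (q / (d + q)))) := by ring
      _ = _ := by rw [hMr, one_mul]
  rw [e]
  field_simp
  ring

lemma aux_split (d : ℕ) (M : ℕ) (q r : ℝ) (hq : 0 < q) (hr : 0 < r) (xs : Fin M → (Fin d → ℝ)) :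
    ∫ x in (Set.Icc (fun _ => (-1 : ℝ)) (fun _ => (1 : ℝ)) : Set (Fin d → ℝ)),
      (r ^ q - ∑ m, max (r ^ q - ‖x - xs m‖ ^ q) 0) =
    2 ^ d * r ^ q - ∑ m, ∫ x in (Set.Icc (fun _ => (-1 : ℝ)) (fun _ => (1 : ℝ)) : Set (Fin d → ℝ)),
      max (r ^ q - ‖x - xs m‖ ^ q) 0 := by
  rw [integral_sub, integral_finsetSum]
  · rw [setIntegral_const, Measure.real, aux_vol_s19, ENNReal.toReal_ofReal (by positivity), smul_eq_mul]
  · exact fun m _ => (aux_int_s19 d q hq r hr (xs m)).integrableOn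
  · exact integrableOn_const (by rw [aux_vol_s19]; exact ENNReal.ofReal_ne_top)
  · exact integrable_finsetSum _ fun m _ => (aux_int_s19 d q hq r hr (xs m)).integrableOn

lemma aux_lower (d : ℕ) (hd : 0 < d) (α : ℝ) (hα : 0 < α) (p : ℝ) (hp : 1 ≤ p)
    (M : ℕ) (hM : 0 < M) (xs : Fin M → (Fin d → ℝ)) :
      ((d : ℝ) / ((d : ℝ) + α * p)) ^ (1 / p) * (M : ℝ) ^ (-(α / (d : ℝ))) ≤
        (∫ x, (⨅ m : Fin M, ‖x - xs m‖ ^ α) ^ p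
          ∂((volume (Set.Icc (fun _ => (-1 : ℝ)) (fun _ => (1 : ℝ)) : Set (Fin d → ℝ)))⁻¹ •
            volume.restrict (Set.Icc (fun _ => (-1 : ℝ)) (fun _ => (1 : ℝ))))) ^ (1 / p) := by
  have hdR : (0 : ℝ) < d := by exact_mod_cast hd
  have hMR : (0 : ℝ) < M := by exact_mod_cast hM
  have hp0 : 0 < p := by linarith
  have hq : 0 < α * p := by positivity
  obtain ⟨r, hr, hMr⟩ : ∃ r : ℝ, 0 < r ∧ (M : ℝ) * r ^ d = 1 := by
    refine ⟨(M : ℝ) ^ (-(1 / (d : ℝ))), by positivity, ?_⟩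
    rw [← Real.rpow_natCast, ← Real.rpow_mul hMR.le]
    have : -(1 / (d : ℝ)) * d = -1 := by field_simp
    rw [this, Real.rpow_neg_one, mul_inv_cancel₀ hMR.ne']
  rw [aux_fin d hd M α p r hα hp hr hMr, aux_vol', ← aux_sum d hd M (α * p) r hq hr hMr xs]
  have hmain : 2 ^ d * r ^ (α * p) - ∑ m, ∫ x, max (r ^ (α * p) - ‖x - xs m‖ ^ (α * p)) 0 ≤
     ∫ x in (Set.Icc (fun _ => (-1 : ℝ)) (fun _ => (1 : ℝ)) : Set (Fin d → ℝ)),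
        (⨅ m : Fin M, ‖x - xs m‖ ^ α) ^ p := by
    calc _ ≤ 2 ^ d * r ^ (α * p) - ∑ m,
        ∫ x in (Set.Icc (fun _ => (-1 : ℝ)) (fun _ => (1 : ℝ)) : Set (Fin d → ℝ)),
          max (r ^ (α * p) - ‖x - xs m‖ ^ (α * p)) 0 := by
          refine sub_le_sub_left (Finset.sum_le_sum fun m _ => ?_) _
          apply setIntegral_le_integral (aux_int_s19 d _ hq r hr (xs m))
          exact Filter.Eventually.of_forall fun x => le_max_right _ _
      _ = _ := (aux_split d M _ r hq hr xs).symm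
      _ ≤ _ := by
        apply integral_mono
        · apply Integrable.sub
          · exact integrableOn_const (by rw [aux_vol_s19]; exact ENNReal.ofReal_ne_top)
          · exact integrable_finsetSum _ fun m _ => (aux_int_s19 d _ hq r hr (xs m)).integrableOn
        · have hc : Continuous (fun x : Fin d → ℝ => ‖x - xs ⟨0, hM⟩‖ ^ (α * p)) :=
            Continuous.rpow_const (by fun_prop) (fun _ => Or.inr hq.le)
          have hi : IntegrableOn (fun x : Fin d → ℝ => ‖x - xs ⟨0, hM⟩‖ ^ (α * p))
            (Set.Icc (fun _ => (-1 : ℝ)) (fun _ => (1 : ℝ))) :=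
            hc.continuousOn.integrableOn_compact isCompact_Icc
          refine Integrable.mono' hi ?_ ?_
          · apply Measurable.aestronglyMeasurable
            apply Measurable.pow_const
            apply Measurable.iInf
            intro m
            apply Measurable.pow_const
            fun_prop
          · refine Filter.Eventually.of_forall fun x => ?_
            obtain ⟨k, hk, hk2⟩ := aux_inf hM α p hα hp xs x
            rw [hk, Real.norm_of_nonneg (by positivity)]
            exact Real.rpow_le_rpow (norm_nonneg _) (hk2 _) hq.le
        · intro x
          obtain ⟨k, hk, hk2⟩ := aux_inf hM α p hα hp xs x
          simp only [hk]
          have := Finset.single_le_sum (f := fun m => max (r ^ (α * p) - ‖x - xs m‖ ^ (α * p)) 0)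
            (fun m _ => le_max_right _ _) (Finset.mem_univ k)
          have h2 := le_max_left (r ^ (α * p) - ‖x - xs k‖ ^ (α * p)) 0
          linarith
  apply Real.rpow_le_rpow
  · rw [aux_sum d hd M (α * p) r hq hr hMr xs]
    positivity
  · gcongr
  · positivity

lemma aux_upper (d : ℕ) (hd : 0 < d) (α : ℝ) (hα : 0 < α) (p : ℝ) (hp : 1 ≤ p)
    (N : ℕ) (hN : 0 < N) (xs : Fin (N ^ d) → (Fin d → ℝ))
    (e : Fin (N ^ d) ≃ (Fin d → Fin N))
    (he : ∀ m, xs m = fun i => (2 * ((e m i : ℕ) : ℝ) + 1) / (N : ℝ) - 1) :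
      (∫ x, (⨅ m : Fin (N ^ d), ‖x - xs m‖ ^ α) ^ p
          ∂((volume (Set.Icc (fun _ => (-1 : ℝ)) (fun _ => (1 : ℝ)) : Set (Fin d → ℝ)))⁻¹ •
            volume.restrict (Set.Icc (fun _ => (-1 : ℝ)) (fun _ => (1 : ℝ))))) ^ (1 / p) =
        ((d : ℝ) / ((d : ℝ) + α * p)) ^ (1 / p) * ((N ^ d : ℕ) : ℝ) ^ (-(α / (d : ℝ))) := by
  have hdR : (0 : ℝ) < d := by exact_mod_cast hd
  have hNR : (0 : ℝ) < N := by exact_mod_cast hN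
  have hp0 : 0 < p := by linarith
  have hq : 0 < α * p := by positivity
  obtain ⟨r, hrdef⟩ : ∃ r : ℝ, r = (N : ℝ)⁻¹ := ⟨_, rfl⟩
  have hr : 0 < r := by rw [hrdef]; positivity
  have hNr : (N : ℝ) * r = 1 := by rw [hrdef]; field_simp
  have hMr : ((N ^ d : ℕ) : ℝ) * r ^ d = 1 := by
    rw [Nat.cast_pow, ← mul_pow, hNr, one_pow]
  have hx : ∀ m i, xs m i = (2 * ((e m i : ℕ) : ℝ) + 1) * r - 1 := by
    intro m i
    rw [he m, hrdef]; rfl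
  -- support
  have hsupp : ∀ m x, ‖x - xs m‖ < r →
      x ∈ (Set.Icc (fun _ => (-1 : ℝ)) (fun _ => (1 : ℝ)) : Set (Fin d → ℝ)) := by
    intro m x h
    have h1 : ∀ i, |x i - xs m i| < r := fun i =>
      lt_of_le_of_lt (norm_le_pi_norm (x - xs m) i) h
    have h2 : ∀ i, -1 ≤ x i ∧ x i ≤ 1 := by
      intro i
      have h3 := abs_lt.1 (h1 i)
      rw [hx] at h3
      have h4 : ((e m i : ℕ) : ℝ) + 1 ≤ N := by exact_mod_cast (e m i).2
      have h5 : (0 : ℝ) ≤ ((e m i : ℕ) : ℝ) * r := by positivity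
      have h6 : (((e m i : ℕ) : ℝ) + 1) * r ≤ N * r := by gcongr
      constructor <;> nlinarith
    exact ⟨fun i => (h2 i).1, fun i => (h2 i).2⟩
  -- disjointness
  have hdisj : ∀ m k x, ‖x - xs m‖ < r → m ≠ k → r ≤ ‖x - xs k‖ := by
    intro m k x h hmk
    by_contra hc
    rw [not_le] at hc
    apply hmk
    apply e.injective
    funext i
    have h1 := abs_lt.1 (lt_of_le_of_lt (norm_le_pi_norm (x - xs m) i) h)
    have h2 := abs_lt.1 (lt_of_le_of_lt (norm_le_pi_norm (x - xs k) i) hc)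
    simp only [Pi.sub_apply, hx] at h1 h2
    have h3 : ((e m i : ℕ) : ℝ) < (e k i : ℕ) + 1 := by
      have : ((e m i : ℕ) : ℝ) * r < ((e k i : ℕ) + 1) * r := by linarith
      exact lt_of_mul_lt_mul_right this hr.le
    have h4 : ((e k i : ℕ) : ℝ) < (e m i : ℕ) + 1 := by
      have : ((e k i : ℕ) : ℝ) * r < ((e m i : ℕ) + 1) * r := by linarith
      exact lt_of_mul_lt_mul_right this hr.le
    have h3' : (e m i : ℕ) < (e k i : ℕ) + 1 := by exact_mod_cast h3
    have h4' : (e k i : ℕ) < (e m i : ℕ) + 1 := by exact_mod_cast h4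
    apply Fin.ext
    omega
  -- covering
  have hcov : ∀ x ∈ (Set.Icc (fun _ => (-1 : ℝ)) (fun _ => (1 : ℝ)) : Set (Fin d → ℝ)),
      ∃ m, ‖x - xs m‖ ≤ r := by
    rintro x ⟨hx1, hx2⟩
    have : ∀ i, ∃ j : Fin N, |x i - ((2 * ((j : ℕ) : ℝ) + 1) * r - 1)| ≤ r := by
      intro i
      have l1 : -1 ≤ x i := hx1 i
      have l2 : x i ≤ 1 := hx2 i
      rcases l2.eq_or_lt with l3 | l3
      · refine ⟨⟨N - 1, by omega⟩, ?_⟩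
        have : ((N - 1 : ℕ) : ℝ) = N - 1 := by
          rw [Nat.cast_sub hN, Nat.cast_one]
        rw [abs_le]
        simp only [this]
        constructor <;> nlinarith
      · have l0 : 0 ≤ N * (x i + 1) / 2 := by
          have : 0 ≤ x i + 1 := by linarith
          positivity
        have f1 := Nat.floor_le l0
        have f2 := Nat.lt_floor_add_one (N * (x i + 1) / 2)
        have f3 : ⌊N * (x i + 1) / 2⌋₊ < N := by
          rw [Nat.floor_lt l0]
          nlinarith
        refine ⟨⟨_, f3⟩, ?_⟩
        simp only
        generalize ((⌊N * (x i + 1) / 2⌋₊ : ℕ) : ℝ) = j at *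
        have g1 : j * r ≤ (N * (x i + 1) / 2) * r := by gcongr
        have g2 : (N * (x i + 1) / 2) * r ≤ (j + 1) * r := by gcongr
        have g3 : (N * (x i + 1) / 2) * r = (x i + 1) / 2 := by
          calc _ = (N * r) * ((x i + 1) / 2) := by ring
            _ = _ := by rw [hNr, one_mul]
        rw [g3] at g1 g2
        rw [abs_le]
        constructor <;> linarith
    choose j hj using this
    refine ⟨e.symm j, ?_⟩
    rw [pi_norm_le_iff_of_nonneg hr.le]
    intro i
    rw [Pi.sub_apply, hx, Equiv.apply_symm_apply]
    exact hj i
  have hM : 0 < N ^ d := by positivity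
  rw [aux_fin d hd (N ^ d) α p r hα hp hr hMr, aux_vol', ← aux_sum d hd _ (α * p) r hq hr hMr xs]
  congr 2
  have hset : ∀ m, ∫ x, max (r ^ (α * p) - ‖x - xs m‖ ^ (α * p)) 0 =
      ∫ x in (Set.Icc (fun _ => (-1 : ℝ)) (fun _ => (1 : ℝ)) : Set (Fin d → ℝ)),
        max (r ^ (α * p) - ‖x - xs m‖ ^ (α * p)) 0 := by
    intro m
    symm
    apply setIntegral_eq_integral_of_forall_compl_eq_zero
    intro x hxX
    have : r ≤ ‖x - xs m‖ := by
      by_contra hc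
      exact hxX (hsupp m x (not_le.1 hc))
    have := Real.rpow_le_rpow hr.le this hq.le
    exact max_eq_right (by linarith)
  simp only [hset]
  rw [← aux_split d _ _ r hq hr xs]
  apply setIntegral_congr_fun measurableSet_Icc
  intro x hxX
  obtain ⟨k, hk, hk2⟩ := aux_inf hM α p hα hp xs x
  obtain ⟨m0, hm0⟩ := hcov x hxX
  have hkr : ‖x - xs k‖ ≤ r := (hk2 m0).trans hm0
  have hkq := Real.rpow_le_rpow (norm_nonneg _) hkr hq.le
  simp only [hk]
  rw [Finset.sum_eq_single k]
  · rw [max_eq_left (by linarith)]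
    ring
  · intro m _ hmk
    have : r ≤ ‖x - xs m‖ := by
      rcases hkr.eq_or_lt with h | h
      · rw [← h]; exact hk2 m
      · exact hdisj k m x h hmk.symm
    have := Real.rpow_le_rpow hr.le this hq.le
    exact max_eq_right (by linarith)
  · simp


/-- For `X = [-1,1]^d` with the `ℓ∞`-norm and normalized Lebesgue measure, and
`ε = 0`: for any datasites, `‖U‖_{L_p} ≥ (d/(d+αp))^(1/p) M^(-α/d)` where
`U(x) = min_m ‖x - x⁽ᵐ⁾‖_∞^α`, and when `M = N^d` equality holds for the centers of the `N^d`
congruent subcubes of side `2/N` partitioning `[-1,1]^d`. -/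
theorem stmt19 (d : ℕ) (hd : 0 < d)
    (α : ℝ) (hα : 0 < α) (hα1 : α ≤ 1) (p : ℝ) (hp : 1 ≤ p) :
    (∀ (M : ℕ), 0 < M → ∀ xs : Fin M → (Fin d → ℝ),
      (∀ m, xs m ∈ Set.Icc (fun _ => (-1 : ℝ)) (fun _ => (1 : ℝ))) →
      ((d : ℝ) / ((d : ℝ) + α * p)) ^ (1 / p) * (M : ℝ) ^ (-(α / (d : ℝ))) ≤
        (∫ x, (⨅ m : Fin M, ‖x - xs m‖ ^ α) ^ p
          ∂((volume (Set.Icc (fun _ => (-1 : ℝ)) (fun _ => (1 : ℝ)) : Set (Fin d → ℝ)))⁻¹ •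
            volume.restrict (Set.Icc (fun _ => (-1 : ℝ)) (fun _ => (1 : ℝ))))) ^ (1 / p)) ∧
    (∀ (N : ℕ), 0 < N → ∀ xs : Fin (N ^ d) → (Fin d → ℝ),
      (∃ e : Fin (N ^ d) ≃ (Fin d → Fin N),
        ∀ m, xs m = fun i => (2 * ((e m i : ℕ) : ℝ) + 1) / (N : ℝ) - 1) →
      (∫ x, (⨅ m : Fin (N ^ d), ‖x - xs m‖ ^ α) ^ p
          ∂((volume (Set.Icc (fun _ => (-1 : ℝ)) (fun _ => (1 : ℝ)) : Set (Fin d → ℝ)))⁻¹ •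
            volume.restrict (Set.Icc (fun _ => (-1 : ℝ)) (fun _ => (1 : ℝ))))) ^ (1 / p) =
        ((d : ℝ) / ((d : ℝ) + α * p)) ^ (1 / p) * ((N ^ d : ℕ) : ℝ) ^ (-(α / (d : ℝ)))) := by
  refine ⟨fun M hM xs _ => aux_lower d hd α hα p hp M hM xs, ?_⟩
  rintro N hN xs ⟨e, he⟩
  exact aux_upper d hd α hα p hp N hN xs e he
end
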